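/- arXiv:1206.2765 — 2 statements merged into one kernel-verified Lean document; each statement's English description precedes it below -/
import Mathlib

section
/- Let G = ⟨a, b; Rⁿ⟩ with n > 1 and σ_a(R) = 0. If an inner automorphism of G sends a to a^{ε₀} b^k and b to b^{ε₁} (as elements of G), then ε₀ = 1, b^{ε₁} = b in G, and b^k = 1 in G. Consequently, distinct maps of the form a ↦ a^{ε₀} b^i, b ↦ b^{ε₁} that define distinct automorphisms of G lie in distinct cosets of Aut(G)/Inn(G). -/
def innAut (G : Type*) [Group G] : Subgroup (MulAut G) := (MulAut.conj : G →* MulAut G).range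

instance innAut_normal (G : Type*) [Group G] : (innAut G).Normal := by
  constructor
  rintro x ⟨g, rfl⟩ f
  refine ⟨f g, ?_⟩
  ext h
  simp [MulAut.conj_apply, MulAut.mul_apply, mul_assoc]

abbrev Out (G : Type*) [Group G] := MulAut G ⧸ innAut G

def ResiduallyFinite (G : Type*) [Group G] : Prop :=
  ∀ g : G, g ≠ 1 → ∃ N : Subgroup G, N.Normal ∧ Finite (G ⧸ N) ∧ g ∉ N

noncomputable def expSum (i : Fin 2) : FreeGroup (Fin 2) →* Multiplicative ℤ :=
  FreeGroup.lift (fun j => Multiplicative.ofAdd (if j = i then (1 : ℤ) else 0))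

noncomputable def σ (i : Fin 2) (w : FreeGroup (Fin 2)) : ℤ :=
  Multiplicative.toAdd (expSum i w)

def NielsenEquiv {G : Type*} [Group G] {n : ℕ} (Y Z : Fin n → G) : Prop :=
  ∃ φ : FreeGroup (Fin n) ≃* FreeGroup (Fin n),
    ∀ i, FreeGroup.lift Y (φ (FreeGroup.of i)) = Z i

def SameTSystem {G : Type*} [Group G] {n : ℕ} (Y Z : Fin n → G) : Prop :=
  ∃ ψ : G ≃* G, NielsenEquiv (fun i => ψ (Y i)) Z

/-!
Write `a`, `b` for the generators. If `R` is conjugate to `b ^ m`, then `b ^ (n * m) = 1` in `G`,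
and the exponent sums, which are defined modulo `σ₁(Rⁿ) = n * m`, decide everything.

Otherwise send `a` to `diag(s, 1)` and `b` to the hyperbolic matrix `B` with rows `(2, 1)` and
`(1, 1)`. The trace of the image of `R` is a Laurent polynomial in `s`, with nonzero coefficients in
two distinct extreme degrees because all entries of nontrivial powers of `B` are nonzero; so it
attains every complex value. The value `ω + ω⁻¹` with `ω` a primitive `2n`-th root of unity makes
the image of `Rⁿ` scalar, and conjugation relations in `G` become relations in `GL₂(ℂ)` up to
scalars. If `b` commutes with the conjugating element, comparing traces gives `k = 0`. If `b` is
inverted by it, exponent sums give `n = 2`, `σ₁(R) = ±1` and `k = 2 * l`; after replacing `a` by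
`a * b ^ l` and choosing `s` so that `R` has trace `0`, comparing traces gives `s = ±1`, but then
the trace of `R` is congruent to that of `B ^ (±1)` modulo `2`, that is, odd.
-/

/-! ### Exponent sums -/

section ExponentSums

theorem σ_mul (i : Fin 2) (x y : FreeGroup (Fin 2)) : σ i (x * y) = σ i x + σ i y := by
  simp [σ]

theorem σ_inv (i : Fin 2) (x : FreeGroup (Fin 2)) : σ i x⁻¹ = -σ i x := by
  simp [σ]

theorem σ_zpow (i : Fin 2) (x : FreeGroup (Fin 2)) (k : ℤ) : σ i (x ^ k) = k * σ i x := by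
  simp [σ]

theorem σ_pow (i : Fin 2) (x : FreeGroup (Fin 2)) (k : ℕ) : σ i (x ^ k) = k * σ i x := by
  simp [σ]

theorem σ_of (i j : Fin 2) : σ i (FreeGroup.of j) = if j = i then 1 else 0 := by
  simp [σ, expSum]

theorem σ_eq_of_isConj (i : Fin 2) {x y : FreeGroup (Fin 2)} (h : IsConj x y) : σ i x = σ i y := by
  obtain ⟨c, rfl⟩ := isConj_iff.1 h
  simp only [σ_mul, σ_inv]
  ring

theorem map_eq_zpow_σ_mul_zpow_σ {H : Type*} [Group H] (f : FreeGroup (Fin 2) →* H)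
    (hf : Commute (f (FreeGroup.of 0)) (f (FreeGroup.of 1))) (w : FreeGroup (Fin 2)) :
    f w = f (FreeGroup.of 0) ^ σ 0 w * f (FreeGroup.of 1) ^ σ 1 w := by
  induction w using FreeGroup.induction_on with
  | C1 => simp [σ]
  | of i => fin_cases i <;> simp [σ_of]
  | inv_of i _ => fin_cases i <;> simp [σ_inv, σ_of]
  | mul x y hx hy =>
    rw [map_mul, hx, hy, σ_mul, σ_mul, zpow_add, zpow_add]
    exact (hf.symm.zpow_zpow _ _).mul_mul_mul_comm _ _

/-- The endomorphism `a ↦ a * b ^ l`, `b ↦ b` of the free group on `a` and `b`. -/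
def shear (l : ℤ) : FreeGroup (Fin 2) →* FreeGroup (Fin 2) :=
  FreeGroup.lift ![FreeGroup.of 0 * FreeGroup.of 1 ^ l, FreeGroup.of 1]

@[simp]
theorem shear_of_zero (l : ℤ) :
    shear l (FreeGroup.of 0) = FreeGroup.of 0 * FreeGroup.of 1 ^ l := by
  simp [shear]

@[simp]
theorem shear_of_one (l : ℤ) : shear l (FreeGroup.of 1) = FreeGroup.of 1 := by
  simp [shear]

theorem shear_shear_neg (l : ℤ) (w : FreeGroup (Fin 2)) : shear l (shear (-l) w) = w := by
  have h : (shear l).comp (shear (-l)) = MonoidHom.id _ := by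
    ext i
    fin_cases i <;> simp
  exact DFunLike.congr_fun h w

theorem σ_shear (i : Fin 2) (l : ℤ) (w : FreeGroup (Fin 2)) :
    σ i (shear l w) = σ i w + if i = 1 then l * σ 0 w else 0 := by
  have h := map_eq_zpow_σ_mul_zpow_σ ((expSum i).comp (shear l)) (Commute.all _ _) w
  replace h := congrArg Multiplicative.toAdd h
  fin_cases i <;> simpa [σ, expSum, mul_comm, add_comm] using h

end ExponentSums

/-! ### Cyclic normal forms -/

section Syllables

variable {G : Type*} [Group G] {x y : G}

/-- The product of the syllables `x ^ α * y ^ β` over a list of pairs `(α, β)`. -/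
def syllableProd (x y : G) (L : List (ℤ × ℤ)) : G :=
  (L.map fun p => x ^ p.1 * y ^ p.2).prod

@[simp]
theorem syllableProd_nil : syllableProd x y [] = 1 := rfl

@[simp]
theorem syllableProd_cons (p : ℤ × ℤ) (L : List (ℤ × ℤ)) :
    syllableProd x y (p :: L) = x ^ p.1 * y ^ p.2 * syllableProd x y L := by
  simp [syllableProd]

@[simp]
theorem syllableProd_append (L L' : List (ℤ × ℤ)) :
    syllableProd x y (L ++ L') = syllableProd x y L * syllableProd x y L' := by
  simp [syllableProd]

theorem isConj_mul_comm (x y : G) : IsConj (x * y) (y * x) :=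
  isConj_iff.2 ⟨x⁻¹, by group⟩

theorem exists_isConj_zpow_mul_syllableProd {α β : ℤ} (h : α = 0 ∨ β = 0) {M : List (ℤ × ℤ)}
    (hM : M ≠ []) :
    ∃ M' : List (ℤ × ℤ), M'.length = M.length ∧
      IsConj (x ^ α * y ^ β * syllableProd x y M) (syllableProd x y M') := by
  rcases h with rfl | rfl
  · obtain ⟨M, ⟨u, v⟩, rfl⟩ := M.eq_nil_or_concat.resolve_left hM
    refine ⟨M ++ [(u, v + β)], by simp, ?_⟩
    simpa [zpow_add, mul_assoc] using
      isConj_mul_comm (y ^ β) (syllableProd x y (M ++ [(u, v)]))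
  · obtain ⟨⟨u, v⟩, M, rfl⟩ := List.exists_cons_of_ne_nil hM
    refine ⟨(α + u, v) :: M, by simp, ?_⟩
    simpa [zpow_add, mul_assoc] using
      IsConj.refl (x ^ α * (x ^ u * (y ^ v * syllableProd x y M)))

theorem exists_isConj_syllableProd_length_lt {L : List (ℤ × ℤ)} (hlen : 1 < L.length)
    {p : ℤ × ℤ} (hp : p ∈ L) (h : p.1 = 0 ∨ p.2 = 0) :
    ∃ L' : List (ℤ × ℤ), L'.length < L.length ∧
      IsConj (syllableProd x y L) (syllableProd x y L') := by
  obtain ⟨L₁, L₂, rfl⟩ := List.append_of_mem hp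
  simp only [List.length_append, List.length_cons] at hlen
  obtain ⟨L', hL', hconj⟩ := exists_isConj_zpow_mul_syllableProd (x := x) (y := y) h
    (M := L₂ ++ L₁) (List.ne_nil_of_length_pos (by rw [List.length_append]; omega))
  refine ⟨L', by simp only [hL', List.length_append, List.length_cons]; omega, ?_⟩
  have hrot := isConj_mul_comm (syllableProd x y L₁) (syllableProd x y (p :: L₂))
  refine IsConj.trans ?_ hconj
  simpa [mul_assoc] using hrot

theorem exists_isConj_syllableProd_reduced (L : List (ℤ × ℤ)) :
    ∃ L' : List (ℤ × ℤ), (L'.length ≤ 1 ∨ ∀ p ∈ L', p.1 ≠ 0 ∧ p.2 ≠ 0) ∧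
      IsConj (syllableProd x y L) (syllableProd x y L') := by
  induction hd : L.length using Nat.strong_induction_on generalizing L with
  | h d ih =>
    subst hd
    by_cases hred : L.length ≤ 1 ∨ ∀ p ∈ L, p.1 ≠ 0 ∧ p.2 ≠ 0
    · exact ⟨L, hred, IsConj.refl _⟩
    · push Not at hred
      obtain ⟨hlen, p, hp, hbad⟩ := hred
      obtain ⟨M, hM, hLM⟩ :=
        exists_isConj_syllableProd_length_lt (x := x) (y := y) hlen hp (or_iff_not_imp_left.2 hbad)
      obtain ⟨L', hL', hML'⟩ := ih _ hM M rfl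
      exact ⟨L', hL', hLM.trans hML'⟩

theorem exists_eq_syllableProd (w : FreeGroup (Fin 2)) :
    ∃ L, w = syllableProd (FreeGroup.of 0) (FreeGroup.of 1) L := by
  induction w using FreeGroup.induction_on with
  | C1 => exact ⟨[], rfl⟩
  | of i =>
    fin_cases i
    · exact ⟨[(1, 0)], by simp⟩
    · exact ⟨[(0, 1)], by simp⟩
  | inv_of i _ =>
    fin_cases i
    · exact ⟨[(-1, 0)], by simp⟩
    · exact ⟨[(0, -1)], by simp⟩
  | mul x y hx hy =>
    obtain ⟨L, rfl⟩ := hx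
    obtain ⟨L', rfl⟩ := hy
    exact ⟨L ++ L', (syllableProd_append _ _).symm⟩

theorem σ_zero_syllableProd (L : List (ℤ × ℤ)) :
    σ 0 (syllableProd (FreeGroup.of 0) (FreeGroup.of 1) L) = (L.map Prod.fst).sum := by
  induction L with
  | nil => simp [σ]
  | cons p L ih => simp [σ_mul, σ_zpow, σ_of, ih]

theorem exists_isConj_syllableProd_of_σ_zero_eq_zero {w : FreeGroup (Fin 2)} (hw : σ 0 w = 0)
    (hconj : ∀ m : ℤ, ¬ IsConj w (FreeGroup.of 1 ^ m)) :
    ∃ L : List (ℤ × ℤ), L ≠ [] ∧ (∀ p ∈ L, p.1 ≠ 0 ∧ p.2 ≠ 0) ∧ (L.map Prod.fst).sum = 0 ∧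
      IsConj w (syllableProd (FreeGroup.of 0) (FreeGroup.of 1) L) := by
  obtain ⟨L₀, rfl⟩ := exists_eq_syllableProd w
  obtain ⟨L, hL, h⟩ :=
    exists_isConj_syllableProd_reduced (x := FreeGroup.of (0 : Fin 2)) (y := FreeGroup.of 1) L₀
  have hsum : (L.map Prod.fst).sum = 0 := by
    rw [← σ_zero_syllableProd, ← σ_eq_of_isConj 0 h, hw]
  match L with
  | [] => exact absurd (by simpa using h) (hconj 0)
  | [(α, β)] =>
    obtain rfl : α = 0 := by simpa using hsum
    exact absurd (by simpa using h) (hconj β)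
  | p :: q :: L => exact ⟨_, List.cons_ne_nil _ _, hL.resolve_left (by simp), hsum, h⟩

end Syllables

/-! ### Representations with diagonal first generator -/

section DiagRep

open Matrix

variable {K S : Type*} [CommRing K] [CommRing S]

/-- The diagonal matrix with entries `s` and `1`. -/
def diagOne : Kˣ →* GL (Fin 2) K where
  toFun s := ⟨!![(s : K), 0; 0, 1], !![((s⁻¹ : Kˣ) : K), 0; 0, 1],
    by simp [Matrix.one_fin_two], by simp [Matrix.one_fin_two]⟩
  map_one' := by ext i j; fin_cases i <;> fin_cases j <;> simp
  map_mul' s t := by ext i j; fin_cases i <;> fin_cases j <;> simp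

@[simp]
theorem coe_diagOne (s : Kˣ) : (diagOne s : Matrix (Fin 2) (Fin 2) K) = !![(s : K), 0; 0, 1] := rfl

theorem trace_diagOne (s : Kˣ) : trace (diagOne s).1 = s + 1 := by
  simp [trace_fin_two]

/-- The representation of the free group on `a` and `b` that sends `a` to `diag(s, 1)` and `b` to
`B`. -/
def diagRep (s : Kˣ) (B : GL (Fin 2) K) : FreeGroup (Fin 2) →* GL (Fin 2) K :=
  FreeGroup.lift ![diagOne s, B]

@[simp]
theorem diagRep_of_zero (s : Kˣ) (B : GL (Fin 2) K) :
    diagRep s B (FreeGroup.of 0) = diagOne s := by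
  simp [diagRep]

@[simp]
theorem diagRep_of_one (s : Kˣ) (B : GL (Fin 2) K) : diagRep s B (FreeGroup.of 1) = B := by
  simp [diagRep]

theorem map_diagRep (f : K →+* S) (s : Kˣ) (B : GL (Fin 2) K) (w : FreeGroup (Fin 2)) :
    GeneralLinearGroup.map f (diagRep s B w) =
      diagRep (Units.map f s) (GeneralLinearGroup.map f B) w := by
  have h : (GeneralLinearGroup.map f).comp (diagRep s B) =
      diagRep (Units.map f s) (GeneralLinearGroup.map f B) := by
    ext i a b
    fin_cases i
    · fin_cases a <;> fin_cases b <;> simp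
    · simp
  exact DFunLike.congr_fun h w

theorem map_trace_diagRep (f : K →+* S) (s : Kˣ) (B : GL (Fin 2) K) (w : FreeGroup (Fin 2)) :
    f (trace (diagRep s B w).1) =
      trace (diagRep (Units.map f s) (GeneralLinearGroup.map f B) w).1 := by
  simp [← map_diagRep, trace_fin_two]

theorem det_diagRep (s : Kˣ) {B : GL (Fin 2) K} (hB : GeneralLinearGroup.det B = 1)
    {w : FreeGroup (Fin 2)} (hw : σ 0 w = 0) : GeneralLinearGroup.det (diagRep s B w) = 1 := by
  simpa [hB, hw] using
    map_eq_zpow_σ_mul_zpow_σ (GeneralLinearGroup.det.comp (diagRep s B)) (Commute.all _ _) w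

theorem diagRep_one (B : GL (Fin 2) K) (w : FreeGroup (Fin 2)) : diagRep 1 B w = B ^ σ 1 w := by
  simpa using map_eq_zpow_σ_mul_zpow_σ (diagRep 1 B) (by simp) w

theorem trace_diagRep_modEq_two (t : ℤˣ) (B : GL (Fin 2) ℤ) (w : FreeGroup (Fin 2)) :
    trace (diagRep t B w).1 ≡ trace (B ^ σ 1 w).1 [ZMOD 2] := by
  rw [← diagRep_one]
  refine (ZMod.intCast_eq_intCast_iff _ _ 2).1 ?_
  simp only [← Int.coe_castRingHom]
  rw [map_trace_diagRep, map_trace_diagRep, Subsingleton.elim (α := (ZMod 2)ˣ) (Units.map _ t)]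

end DiagRep

/-! ### Traces of words as functions of the parameter -/

section TraceForm

open Matrix Polynomial

/-- The nonzero entries of `M` are precisely those of its row `i`. -/
def IsSupportedOnRow {ι K : Type*} [Zero K] (M : Matrix ι ι K) (i : ι) : Prop :=
  ∀ j k, M j k ≠ 0 ↔ j = i

namespace IsSupportedOnRow

variable {ι K : Type*} [Fintype ι] [Semiring K]

theorem mul [NoZeroDivisors K] {M N : Matrix ι ι K} {i j : ι} (hM : IsSupportedOnRow M i)
    (hN : IsSupportedOnRow N j) : IsSupportedOnRow (M * N) i := by
  intro x y
  have hxy : (M * N) x y = M x j * N j y := by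
    rw [Matrix.mul_apply]
    refine Finset.sum_eq_single j (fun z _ hz => ?_) (by simp)
    rw [not_not.1 (mt (hN z y).1 hz), mul_zero]
  rw [hxy, mul_ne_zero_iff, hM, hN]
  simp

theorem exists_list_prod [NoZeroDivisors K] [DecidableEq ι] :
    ∀ {L : List (Matrix ι ι K)}, L ≠ [] → (∀ M ∈ L, ∃ i, IsSupportedOnRow M i) →
      ∃ i, IsSupportedOnRow L.prod i
  | [], h, _ => absurd rfl h
  | [M], _, h => by simpa using h
  | M :: N :: L, _, h => by
    obtain ⟨⟨i, hi⟩, hL⟩ := List.forall_mem_cons.1 h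
    obtain ⟨j, hj⟩ := exists_list_prod (List.cons_ne_nil N L) hL
    exact ⟨i, by rw [List.prod_cons]; exact hi.mul hj⟩

theorem trace_ne_zero {M : Matrix ι ι K} {i : ι} (hM : IsSupportedOnRow M i) : trace M ≠ 0 := by
  have htrace : trace M = M i i :=
    Finset.sum_eq_single i (fun x _ hx => not_not.1 (mt (hM x x).1 hx)) (by simp)
  rw [htrace, hM]

end IsSupportedOnRow

variable {K S : Type*} [CommRing K] [CommRing S]

/-- The homogenised image of the syllable `a ^ α * b ^ β`: here `a` acts as `diag(x, y)` and `a⁻¹`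
as `diag(y, x)`, which is `x * y` times the inverse, so that `x` and `y` are allowed to vanish. -/
def syllableMatrix (B : GL (Fin 2) K) (x y : K) (p : ℤ × ℤ) : Matrix (Fin 2) (Fin 2) K :=
  diagonal ![x ^ p.1.toNat * y ^ (-p.1).toNat, x ^ (-p.1).toNat * y ^ p.1.toNat] * (B ^ p.2).1

/-- The trace of the product of the homogenised syllables `syllableMatrix B x y` of a word; it is
homogeneous in `x` and `y`. -/
def traceForm (B : GL (Fin 2) K) (L : List (ℤ × ℤ)) (x y : K) : K :=
  trace (L.map (syllableMatrix B x y)).prod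

theorem map_syllableMatrix (f : K →+* S) (B : GL (Fin 2) K) (x y : K) (p : ℤ × ℤ) :
    f.mapMatrix (syllableMatrix B x y p) =
      syllableMatrix (GeneralLinearGroup.map f B) (f x) (f y) p := by
  rw [syllableMatrix, syllableMatrix, map_mul, ← map_zpow]
  congr 1
  ext i j
  fin_cases i <;> fin_cases j <;> simp

theorem map_traceForm (f : K →+* S) (B : GL (Fin 2) K) (L : List (ℤ × ℤ)) (x y : K) :
    f (traceForm B L x y) = traceForm (GeneralLinearGroup.map f B) L (f x) (f y) := by
  rw [traceForm, AddMonoidHom.map_trace, ← RingHom.mapMatrix_apply, map_list_prod, List.map_map]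
  simp only [Function.comp_def, map_syllableMatrix]
  rfl

theorem syllableMatrix_mul_mul (B : GL (Fin 2) K) (c x y : K) (p : ℤ × ℤ) :
    syllableMatrix B (c * x) (c * y) p = c ^ p.1.natAbs • syllableMatrix B x y p := by
  have habs : c ^ p.1.natAbs = c ^ p.1.toNat * c ^ (-p.1).toNat := by
    rw [← pow_add]
    congr 1
    omega
  rw [syllableMatrix, syllableMatrix, ← smul_mul_assoc, habs]
  congr 1
  ext i j
  fin_cases i <;> fin_cases j <;> simp only [mul_pow] <;> simp <;> ring

theorem traceForm_mul_mul (B : GL (Fin 2) K) (L : List (ℤ × ℤ)) (c x y : K) :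
    traceForm B L (c * x) (c * y) =
      c ^ (L.map fun p => p.1.natAbs).sum * traceForm B L x y := by
  have h : (L.map (syllableMatrix B (c * x) (c * y))).prod =
      c ^ (L.map fun p => p.1.natAbs).sum • (L.map (syllableMatrix B x y)).prod := by
    induction L with
    | nil => simp
    | cons p L ih =>
      simp only [List.map_cons, List.prod_cons, ih, syllableMatrix_mul_mul, smul_mul_smul_comm,
        List.sum_cons, pow_add]
  rw [traceForm, h, trace_smul, smul_eq_mul, traceForm]

theorem syllableMatrix_one (s : Kˣ) (B : GL (Fin 2) K) (p : ℤ × ℤ) :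
    syllableMatrix B s 1 p = (s : K) ^ (-p.1).toNat • (diagOne s ^ p.1 * B ^ p.2).1 := by
  obtain ⟨α, β⟩ := p
  rw [syllableMatrix, Units.val_mul, ← smul_mul_assoc, ← map_zpow, coe_diagOne]
  congr 1
  obtain ⟨n, rfl | rfl⟩ := α.eq_nat_or_neg <;> ext i j <;> fin_cases i <;> fin_cases j <;>
    simp [← mul_pow]

theorem traceForm_one (s : Kˣ) (B : GL (Fin 2) K) (L : List (ℤ × ℤ)) :
    traceForm B L s 1 = (s : K) ^ (L.map fun p => (-p.1).toNat).sum *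
      trace (diagRep s B (syllableProd (FreeGroup.of 0) (FreeGroup.of 1) L)).1 := by
  have h : (L.map (syllableMatrix B s 1)).prod = (s : K) ^ (L.map fun p => (-p.1).toNat).sum •
      (diagRep s B (syllableProd (FreeGroup.of 0) (FreeGroup.of 1) L)).1 := by
    induction L with
    | nil => simp
    | cons p L ih =>
      simp only [List.map_cons, List.prod_cons, ih, syllableMatrix_one, smul_mul_smul_comm,
        List.sum_cons, pow_add, syllableProd_cons, map_mul, map_zpow, diagRep_of_zero,
        diagRep_of_one, Units.val_mul]
  rw [traceForm, h, trace_smul, smul_eq_mul]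

theorem exists_isSupportedOnRow_syllableMatrix {B : GL (Fin 2) K} {p : ℤ × ℤ}
    (hp : p.1 ≠ 0) (hB : ∀ i j, (B ^ p.2).1 i j ≠ 0) :
    (∃ i, IsSupportedOnRow (syllableMatrix B 1 0 p) i) ∧
      ∃ i, IsSupportedOnRow (syllableMatrix B 0 1 p) i := by
  rcases hp.lt_or_gt with h | h
  · have hpos : (-p.1).toNat ≠ 0 := by omega
    have hneg : p.1.toNat = 0 := by omega
    refine ⟨⟨1, fun i j => ?_⟩, ⟨0, fun i j => ?_⟩⟩ <;>
      fin_cases i <;> simp [syllableMatrix, hpos, hneg, hB, -coe_units_zpow]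
  · have hpos : p.1.toNat ≠ 0 := by omega
    have hneg : (-p.1).toNat = 0 := by omega
    refine ⟨⟨0, fun i j => ?_⟩, ⟨1, fun i j => ?_⟩⟩ <;>
      fin_cases i <;> simp [syllableMatrix, hpos, hneg, hB, -coe_units_zpow]

theorem traceForm_one_zero_ne_zero_and_zero_one_ne_zero [NoZeroDivisors K] {B : GL (Fin 2) K}
    (hB : ∀ k : ℤ, k ≠ 0 → ∀ i j, (B ^ k).1 i j ≠ 0) {L : List (ℤ × ℤ)} (hne : L ≠ [])
    (hL : ∀ p ∈ L, p.1 ≠ 0 ∧ p.2 ≠ 0) : traceForm B L 1 0 ≠ 0 ∧ traceForm B L 0 1 ≠ 0 := by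
  have hrow (p) (hp : p ∈ L) :=
    exists_isSupportedOnRow_syllableMatrix (hL p hp).1 (hB _ (hL p hp).2)
  have htrace (x y : K) (h : ∀ p ∈ L, ∃ i, IsSupportedOnRow (syllableMatrix B x y p) i) :
      traceForm B L x y ≠ 0 := by
    obtain ⟨i, hi⟩ := IsSupportedOnRow.exists_list_prod (L := L.map (syllableMatrix B x y))
      (by simpa using hne) (List.forall_mem_map.2 h)
    exact hi.trace_ne_zero
  exact ⟨htrace 1 0 fun p hp => (hrow p hp).1, htrace 0 1 fun p hp => (hrow p hp).2⟩

theorem exists_ne_zero_eval_eq_zero {K : Type*} [Field K] [IsAlgClosed K] {p q : K[X]} {d : ℕ}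
    (hd : d ≠ 0) (hp : p.eval 0 ≠ 0) (hq : q.eval 0 ≠ 0)
    (hpq : ∀ t ≠ 0, q.eval t = t ^ d * p.eval t⁻¹) : ∃ s ≠ 0, p.eval s = 0 := by
  have hdeg : p.degree ≠ 0 := by
    intro hdeg
    obtain ⟨c, rfl⟩ : ∃ c, p = C c := ⟨_, eq_C_of_degree_eq_zero hdeg⟩
    have hqc : q = C c * X ^ d := by
      refine eq_of_infinite_eval_eq _ _
        ((Set.finite_singleton 0).infinite_compl.mono fun t ht => ?_)
      rw [Set.mem_ofPred_eq, hpq t ht, eval_mul, eval_pow, eval_C, eval_C, eval_X, mul_comm]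
    exact hq (by simp [hqc, hd])
  obtain ⟨s, hs⟩ := IsAlgClosed.exists_root p hdeg
  exact ⟨s, by rintro rfl; exact hp hs, hs⟩

theorem natCast_sum_natAbs_fst (L : List (ℤ × ℤ)) :
    (((L.map fun p => p.1.natAbs).sum : ℕ) : ℤ) =
      2 * ((L.map fun p => (-p.1).toNat).sum : ℕ) + (L.map Prod.fst).sum := by
  induction L with
  | nil => simp
  | cons p L ih =>
    simp only [List.map_cons, List.sum_cons, Nat.cast_add, mul_add, ih]
    omega

theorem exists_traceForm_eq {K : Type*} [Field K] [IsAlgClosed K] {B : GL (Fin 2) K}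
    (hB : ∀ k : ℤ, k ≠ 0 → ∀ i j, (B ^ k).1 i j ≠ 0) {L : List (ℤ × ℤ)} (hne : L ≠ [])
    (hL : ∀ p ∈ L, p.1 ≠ 0 ∧ p.2 ≠ 0) (hsum : (L.map Prod.fst).sum = 0) (τ : K) :
    ∃ s : Kˣ, traceForm B L s 1 = s ^ (L.map fun p => (-p.1).toNat).sum * τ := by
  set N := (L.map fun p => (-p.1).toNat).sum
  have hdeg : (L.map fun p => p.1.natAbs).sum = 2 * N := by
    have h := natCast_sum_natAbs_fst L
    rw [hsum, add_zero] at h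
    exact_mod_cast h
  have hN : N ≠ 0 := by
    obtain ⟨p, L', rfl⟩ := List.exists_cons_of_ne_nil hne
    have hp := (hL p List.mem_cons_self).1
    rw [List.map_cons, List.sum_cons] at hdeg
    omega
  have heval (x y : K[X]) (t : K) :
      (traceForm (GeneralLinearGroup.map C B) L x y).eval t =
        traceForm B L (x.eval t) (y.eval t) := by
    rw [← coe_evalRingHom, map_traceForm, ← GeneralLinearGroup.map_comp_apply]
    congr
    ext i j
    simp
  obtain ⟨h10, h01⟩ := traceForm_one_zero_ne_zero_and_zero_one_ne_zero hB hne hL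
  obtain ⟨s, hs0, hs⟩ := exists_ne_zero_eval_eq_zero (d := 2 * N)
    (p := traceForm (GeneralLinearGroup.map C B) L X 1 - X ^ N * C τ)
    (q := traceForm (GeneralLinearGroup.map C B) L 1 X - X ^ N * C τ)
    (by omega) (by simpa [heval, hN] using h01) (by simpa [heval, hN] using h10) (by
      intro t ht
      have hhom := traceForm_mul_mul B L t t⁻¹ 1
      rw [mul_inv_cancel₀ ht, mul_one, hdeg] at hhom
      have hpow : t ^ (2 * N) * t⁻¹ ^ N = t ^ N := by
        rw [two_mul, pow_add, mul_assoc, ← mul_pow, mul_inv_cancel₀ ht, one_pow, mul_one]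
      simp only [eval_sub, heval, eval_one, eval_X, hhom, eval_mul, eval_pow, eval_C]
      linear_combination τ * hpow)
  exact ⟨Units.mk0 s hs0, by simpa [heval, sub_eq_zero, mul_comm] using hs⟩

theorem exists_trace_diagRep_eq {K : Type*} [Field K] [IsAlgClosed K] {B : GL (Fin 2) K}
    (hB : ∀ k : ℤ, k ≠ 0 → ∀ i j, (B ^ k).1 i j ≠ 0) {w : FreeGroup (Fin 2)} (hw : σ 0 w = 0)
    (hconj : ∀ m : ℤ, ¬ IsConj w (FreeGroup.of 1 ^ m)) (τ : K) :
    ∃ s : Kˣ, trace (diagRep s B w).1 = τ := by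
  obtain ⟨L, hne, hL, hsum, h⟩ := exists_isConj_syllableProd_of_σ_zero_eq_zero hw hconj
  obtain ⟨s, hs⟩ := exists_traceForm_eq hB hne hL hsum τ
  refine ⟨s, ?_⟩
  rw [traceForm_one] at hs
  obtain ⟨g, hg⟩ := isConj_iff.1 h
  rw [← mul_left_cancel₀ (pow_ne_zero _ s.ne_zero) hs, ← hg, map_mul, map_mul, map_inv]
  exact (trace_units_conj _ _).symm

end TraceForm

/-! ### Powers that are scalar -/

open Matrix Polynomial in
theorem pow_eq_scalar_of_trace_eq_of_det_eq {K : Type*} [CommRing K] {x y : K} {n : ℕ}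
    {M : Matrix (Fin 2) (Fin 2) K} (htrace : trace M = x + y) (hdet : det M = x * y)
    (hxy : IsUnit (x - y)) (hn : x ^ n = y ^ n) : M ^ n = scalar (Fin 2) (x ^ n) := by
  nontriviality K
  have hchar : M.charpoly = (X - C x) * (X - C y) := by
    rw [charpoly_fin_two, htrace, hdet, C_add, C_mul]
    ring
  have hdvd : (X - C x) * (X - C y) ∣ X ^ n - C (x ^ n) :=
    (isCoprime_X_sub_C_of_isUnit_sub hxy).mul_dvd
      (dvd_iff_isRoot.2 (by simp)) (dvd_iff_isRoot.2 (by simp [hn]))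
  have hzero : aeval M (X ^ n - C (x ^ n)) = 0 :=
    aeval_eq_zero_of_dvd_aeval_eq_zero hdvd (by rw [← hchar, aeval_self_charpoly])
  rw [map_sub, map_pow, aeval_X, aeval_C, sub_eq_zero] at hzero
  exact hzero

/-! ### The cat map -/

section CatMap

open Matrix

/-- The matrix whose powers consist of Fibonacci numbers. -/
def fibGL (K : Type*) [CommRing K] : GL (Fin 2) K where
  val := !![1, 1; 1, 0]
  inv := !![0, 1; 1, -1]
  val_inv := by simp [one_fin_two]
  inv_val := by simp [one_fin_two]

/-- Arnold's cat map, the matrix with rows `(2, 1)` and `(1, 1)`; as the square of `fibGL K` it has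
determinant `1` and Fibonacci numbers as the entries of its powers. -/
def catGL (K : Type*) [CommRing K] : GL (Fin 2) K := fibGL K ^ 2

variable {K S : Type*} [CommRing K] [CommRing S]

theorem coe_fibGL_zpow (k : ℤ) : (fibGL K ^ k).1 =
    !![(Int.fib (k + 1) : K), (Int.fib k : K); (Int.fib k : K), (Int.fib (k - 1) : K)] := by
  have hfib (m : ℤ) : (Int.fib (m + 1) : K) = Int.fib (m - 1) + Int.fib m := by
    simpa [sub_add_eq_add_sub, add_sub_assoc] using
      congrArg (Int.cast (R := K)) (Int.fib_add_two (n := m - 1))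
  induction k using Int.induction_on with
  | zero => simp [one_fin_two]
  | succ k ih =>
    rw [_root_.zpow_add_one, Units.val_mul, ih, hfib (k + 1), hfib k]
    simp [fibGL, add_comm]
  | pred k ih =>
    have h := hfib (-k - 1)
    rw [sub_add_cancel] at h
    rw [_root_.zpow_sub_one, Units.val_mul, ih, hfib (-k), sub_add_cancel,
      eq_sub_of_add_eq h.symm]
    simp [fibGL, sub_eq_add_neg]

theorem coe_catGL_zpow (k : ℤ) : (catGL K ^ k).1 =
    !![(Int.fib (2 * k + 1) : K), (Int.fib (2 * k) : K);
      (Int.fib (2 * k) : K), (Int.fib (2 * k - 1) : K)] := by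
  rw [← coe_fibGL_zpow, _root_.zpow_mul, zpow_ofNat, catGL]

@[simp]
theorem det_catGL : GeneralLinearGroup.det (catGL K) = 1 := by
  ext
  simp [catGL, fibGL]

@[simp]
theorem map_catGL (f : K →+* S) : GeneralLinearGroup.map f (catGL K) = catGL S := by
  have h : GeneralLinearGroup.map f (fibGL K) = fibGL S := by
    ext i j
    fin_cases i <;> fin_cases j <;> simp [fibGL]
  rw [catGL, map_pow, h, catGL]

theorem catGL_zpow_apply_ne_zero [CharZero K] {k : ℤ} (hk : k ≠ 0) (i j : Fin 2) :
    (catGL K ^ k).1 i j ≠ 0 := by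
  have h (m : ℤ) (hm : m ≠ 0) : (Int.fib m : K) ≠ 0 := by simpa [Int.fib_eq_zero] using hm
  rw [coe_catGL_zpow]
  fin_cases i <;> fin_cases j
  exacts [h _ (by omega), h _ (by omega), h _ (by omega), h _ (by omega)]

theorem trace_catGL : trace (catGL K).1 = 3 := by
  rw [← _root_.zpow_one (catGL K), coe_catGL_zpow]
  norm_num [trace_fin_two, show Int.fib 3 = 2 from rfl]

theorem trace_inv_catGL : trace (catGL K)⁻¹.1 = 3 := by
  rw [← _root_.zpow_neg_one (catGL K), coe_catGL_zpow]
  norm_num [trace_fin_two, show Int.fib (-3) = 2 from rfl]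

theorem trace_diagOne_mul_catGL_zpow (s : Kˣ) (k : ℤ) :
    trace (diagOne s * catGL K ^ k).1 =
      s * (Int.fib (2 * k + 1) : K) + (Int.fib (2 * k - 1) : K) := by
  rw [Units.val_mul, coe_catGL_zpow]
  simp [trace_fin_two]

theorem trace_diagOne_mul_catGL (s : Kˣ) : trace (diagOne s * catGL K).1 = 2 * s + 1 := by
  nth_rw 1 [← _root_.zpow_one (catGL K)]
  rw [trace_diagOne_mul_catGL_zpow]
  norm_num [show Int.fib 3 = 2 from rfl, mul_comm]

theorem trace_diagOne_mul_inv_catGL (s : Kˣ) : trace (diagOne s * (catGL K)⁻¹).1 = s + 2 := by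
  rw [← _root_.zpow_neg_one, trace_diagOne_mul_catGL_zpow]
  norm_num [show Int.fib (-3) = 2 from rfl]

theorem fib_two_mul_add_one_add_one (k : ℤ) :
    Int.fib (2 * (k + 1) + 1) = 3 * Int.fib (2 * k + 1) - Int.fib (2 * k - 1) := by
  have h₁ := Int.fib_add_two (2 * k - 1)
  have h₂ := Int.fib_add_two (2 * k)
  have h₃ := Int.fib_add_two (2 * k + 1)
  ring_nf at h₁ h₂ h₃ ⊢
  linarith

theorem three_mul_fib_mul_fib_sub_sq_sub_sq (k : ℤ) :
    3 * Int.fib (2 * k + 1) * Int.fib (2 * k - 1) - Int.fib (2 * k + 1) ^ 2 -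
      Int.fib (2 * k - 1) ^ 2 = 1 := by
  have hadd := Int.fib_add_two (2 * k - 1)
  have hcassini := Int.fib_succ_mul_fib_pred_sub_fib_sq (2 * k)
  rw [(Int.natAbs_even.2 (even_two_mul k)).neg_one_pow] at hcassini
  rw [sub_add_cancel, show 2 * k - 1 + 2 = 2 * k + 1 by ring] at hadd
  rw [eq_sub_of_add_eq' hadd.symm] at hcassini
  linear_combination hcassini

theorem two_lt_fib_add_fib {k : ℤ} (hk : k ≠ 0) :
    2 < Int.fib (2 * k + 1) + Int.fib (2 * k - 1) := by
  have hsucc : 0 < Int.fib (2 * k + 1) := Int.fib_two_mul_add_one_pos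
  have hpred : 0 < Int.fib (2 * k - 1) := by
    convert Int.fib_two_mul_add_one_pos (n := k - 1) using 2
    ring
  have hmid : Int.fib (2 * k) ≠ 0 := by simpa [Int.fib_eq_zero] using hk
  have hadd := Int.fib_add_two (n := 2 * k - 1)
  ring_nf at hadd hsucc hpred hmid ⊢
  omega

end CatMap

/-! ### Conjugation up to scalars -/

section ConjScalar

open Matrix

variable {ι K : Type*} [Fintype ι] [DecidableEq ι] [CommRing K]

theorem trace_eq_mul_of_conj_eq_scalar_mul {M X Y : GL ι K} {c : Kˣ}
    (h : M * X * M⁻¹ = GeneralLinearGroup.scalar ι c * Y) : trace X.1 = c * trace Y.1 := by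
  rw [← trace_units_conj M X.1, ← Units.val_mul, ← Units.val_mul, h]
  simp [GeneralLinearGroup.scalar, ← smul_eq_diagonal_mul]

theorem pow_card_eq_one_of_conj_eq_scalar_mul {M X Y : GL ι K} {c : Kˣ}
    (h : M * X * M⁻¹ = GeneralLinearGroup.scalar ι c * Y)
    (hdet : GeneralLinearGroup.det X = GeneralLinearGroup.det Y) :
    (c : K) ^ Fintype.card ι = 1 := by
  have hpow : c ^ Fintype.card ι = 1 := by simpa [hdet] using congrArg GeneralLinearGroup.det h
  rw [← Units.val_pow_eq_pow_val, hpow, Units.val_one]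

theorem conj_mul_eq_scalar_mul {M X Y X' Y' : GL ι K} {c c' : Kˣ}
    (h : M * X * M⁻¹ = GeneralLinearGroup.scalar ι c * Y)
    (h' : M * X' * M⁻¹ = GeneralLinearGroup.scalar ι c' * Y') :
    M * (X * X') * M⁻¹ = GeneralLinearGroup.scalar ι (c * c') * (Y * Y') := by
  have hcentral : GeneralLinearGroup.scalar ι c' ∈ Subgroup.center (GL ι K) :=
    GeneralLinearGroup.center_eq_range_scalar.ge ⟨c', rfl⟩
  rw [← conj_mul, h, h', map_mul]
  exact Commute.mul_mul_mul_comm (Subgroup.mem_center_iff.1 hcentral Y) _ _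

variable [IsDomain K] [CharZero K] {s c d : Kˣ} {M : GL (Fin 2) K}

theorem eq_one_of_three_eq_mul_three (h : (3 : K) = d * 3) : d = 1 := by
  ext
  exact mul_right_cancel₀ (OfNat.ofNat_ne_zero 3) (by rw [← h, Units.val_one, one_mul])

theorem eq_zero_of_conj_diagOne {k : ℤ}
    (ha : M * diagOne s * M⁻¹ = GeneralLinearGroup.scalar (Fin 2) c * (diagOne s * catGL K ^ k))
    (hb : M * catGL K * M⁻¹ = GeneralLinearGroup.scalar (Fin 2) d * catGL K) : k = 0 := by
  by_contra hk
  obtain rfl : d = 1 := eq_one_of_three_eq_mul_three (by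
    simpa only [trace_catGL] using trace_eq_mul_of_conj_eq_scalar_mul hb)
  have hc : (c : K) ^ 2 = 1 := pow_card_eq_one_of_conj_eq_scalar_mul ha (by simp)
  have hab := conj_mul_eq_scalar_mul ha hb
  rw [mul_assoc (diagOne s), ← _root_.zpow_add_one, mul_one] at hab
  replace ha := trace_eq_mul_of_conj_eq_scalar_mul ha
  replace hab := trace_eq_mul_of_conj_eq_scalar_mul hab
  rw [trace_diagOne_mul_catGL_zpow] at ha hab
  rw [trace_diagOne_mul_catGL] at hab
  rw [trace_diagOne] at ha
  rw [fib_two_mul_add_one_add_one, show 2 * (k + 1) - 1 = 2 * k + 1 by ring] at hab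
  push_cast at hab
  have hlt := two_lt_fib_add_fib hk
  have hfib := congrArg (Int.cast (R := K)) (three_mul_fib_mul_fib_sub_sq_sub_sq k)
  push_cast at hfib
  set p := Int.fib (2 * k + 1)
  set m := Int.fib (2 * k - 1)
  -- The traces of `a` and `a * b` give linear equations for `s`, and eliminating `s` leaves this
  -- equation for the trace `p + m` of `B ^ k`.
  have hsum : (c : K) * (p + m) = 2 := by
    linear_combination (1 - c * p) * hab - (2 - c * (3 * p - m)) * ha + hc + c ^ 2 * hfib
  have hsq : (p + m) ^ 2 = 2 ^ 2 := by
    have : ((p : K) + m) ^ 2 = 2 ^ 2 := by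
      linear_combination (c * (p + m) + 2) * hsum - (p + m) ^ 2 * hc
    exact_mod_cast this
  nlinarith

theorem sq_eq_one_of_conj_diagOne
    (ha : M * diagOne s * M⁻¹ = GeneralLinearGroup.scalar (Fin 2) c * diagOne s)
    (hb : M * catGL K * M⁻¹ = GeneralLinearGroup.scalar (Fin 2) d * (catGL K)⁻¹) :
    (s : K) ^ 2 = 1 := by
  obtain rfl : d = 1 := eq_one_of_three_eq_mul_three (by
    simpa only [trace_catGL, trace_inv_catGL] using trace_eq_mul_of_conj_eq_scalar_mul hb)
  have hc : (c : K) ^ 2 = 1 := pow_card_eq_one_of_conj_eq_scalar_mul ha rfl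
  have htrace := trace_eq_mul_of_conj_eq_scalar_mul (conj_mul_eq_scalar_mul ha hb)
  rw [trace_diagOne_mul_catGL, trace_diagOne_mul_inv_catGL, mul_one] at htrace
  have hs : (3 : K) * s ^ 2 = 3 * 1 := by
    linear_combination (2 * s + 1 + c * (s + 2)) * htrace + (s + 2) ^ 2 * hc
  exact mul_left_cancel₀ (OfNat.ofNat_ne_zero 3) hs

end ConjScalar

/-! ### Conjugation in presented groups -/

section Presented

open Matrix

variable {α : Type*} {rels : Set (FreeGroup α)}

theorem exists_conj_mul_inv_mem_normalClosure (g : PresentedGroup rels) :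
    ∃ w : FreeGroup α, ∀ u v,
      g * PresentedGroup.mk rels u * g⁻¹ = PresentedGroup.mk rels v →
        w * u * w⁻¹ * v⁻¹ ∈ Subgroup.normalClosure rels := by
  obtain ⟨w, rfl⟩ := PresentedGroup.mk_surjective rels g
  refine ⟨w, fun u v h => PresentedGroup.mk_eq_one_iff.1 ?_⟩
  simp only [map_mul, map_inv, h, mul_inv_cancel]

theorem exists_conj_eq_scalar_mul {ι K : Type*} [Fintype ι] [DecidableEq ι] [CommRing K]
    (ρ : FreeGroup α →* GL ι K) (hρ : ∀ r ∈ rels, ρ r ∈ Subgroup.center (GL ι K))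
    (g : PresentedGroup rels) :
    ∃ M : GL ι K, ∀ u v, g * PresentedGroup.mk rels u * g⁻¹ = PresentedGroup.mk rels v →
      ∃ c : Kˣ, M * ρ u * M⁻¹ = GeneralLinearGroup.scalar ι c * ρ v := by
  obtain ⟨w, hw⟩ := exists_conj_mul_inv_mem_normalClosure g
  have hle : Subgroup.normalClosure rels ≤ (Subgroup.center (GL ι K)).comap ρ :=
    Subgroup.normalClosure_le_normal hρ
  refine ⟨ρ w, fun u v h => ?_⟩
  have hmem := hle (hw u v h)
  rw [Subgroup.mem_comap, GeneralLinearGroup.center_eq_range_scalar] at hmem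
  obtain ⟨c, hc⟩ := hmem
  exact ⟨c, by simp [hc]⟩

end Presented

section OneRelator

open Matrix

variable {r R : FreeGroup (Fin 2)} {n : ℕ}

theorem σ_modEq_of_conj_mk_eq {g : PresentedGroup {r}} {u v : FreeGroup (Fin 2)}
    (h : g * PresentedGroup.mk {r} u * g⁻¹ = PresentedGroup.mk {r} v) (i : Fin 2) :
    σ i u ≡ σ i v [ZMOD σ i r] := by
  obtain ⟨w, hw⟩ := exists_conj_mul_inv_mem_normalClosure g
  have hle : Subgroup.normalClosure {r} ≤ (Subgroup.zpowers (expSum i r)).comap (expSum i) :=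
    Subgroup.normalClosure_le_normal (by simp)
  obtain ⟨t, ht⟩ := Subgroup.mem_zpowers_iff.1 (hle (hw u v h))
  have hσ : t * σ i r = σ i (w * u * w⁻¹ * v⁻¹) := by
    simpa [σ] using congrArg Multiplicative.toAdd ht
  simp only [σ_mul, σ_inv] at hσ
  exact (Int.modEq_iff_dvd.2 ⟨t, by linear_combination -hσ⟩).symm

theorem of_one_zpow_eq_one_of_isConj {m t : ℤ} (h : IsConj r (FreeGroup.of 1 ^ m))
    (ht : σ 1 r ∣ t) : (PresentedGroup.of 1 : PresentedGroup {r}) ^ t = 1 := by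
  have hm : σ 1 r = m := by simp [σ_eq_of_isConj 1 h, σ_zpow, σ_of]
  have hpow : (PresentedGroup.of 1 : PresentedGroup {r}) ^ m = 1 := by
    have hmap := (PresentedGroup.mk {r}).map_isConj h
    rw [PresentedGroup.one_of_mem (Set.mem_singleton r), isConj_one_right, map_zpow] at hmap
    exact hmap
  obtain ⟨q, rfl⟩ := ht
  rw [hm, _root_.zpow_mul, hpow, _root_.one_zpow]

theorem exists_diagRep_pow_mem_center {K : Type*} [Field K] [IsAlgClosed K] [CharZero K]
    (hσ : σ 0 R = 0) (hR : ∀ m : ℤ, ¬ IsConj R (FreeGroup.of 1 ^ m)) {x : K} (hx : x ≠ 0)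
    (hne : x ≠ x⁻¹) (hn : x ^ n = x⁻¹ ^ n) :
    ∃ s : Kˣ, trace (diagRep s (catGL K) R).1 = x + x⁻¹ ∧
      diagRep s (catGL K) (R ^ n) ∈ Subgroup.center (GL (Fin 2) K) := by
  obtain ⟨s, hs⟩ :=
    exists_trace_diagRep_eq (fun k hk => catGL_zpow_apply_ne_zero hk) hσ hR (x + x⁻¹)
  have hdet : det (diagRep s (catGL K) R).1 = x * x⁻¹ := by
    rw [mul_inv_cancel₀ hx]
    exact congrArg Units.val (det_diagRep s det_catGL hσ)
  refine ⟨s, hs, GeneralLinearGroup.mem_center_iff_val_mem_range_scalar.2 ⟨x ^ n, ?_⟩⟩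
  rw [map_pow (diagRep _ _), Units.val_pow_eq_pow_val]
  exact (pow_eq_scalar_of_trace_eq_of_det_eq hs hdet (sub_ne_zero.2 hne).isUnit hn).symm

theorem trace_diagRep_catGL_ne_zero {K : Type*} [CommRing K] [IsDomain K] [CharZero K] {s : Kˣ}
    (hs : (s : K) ^ 2 = 1) {w : FreeGroup (Fin 2)} (hw : IsUnit (σ 1 w)) :
    trace (diagRep s (catGL K) w).1 ≠ 0 := by
  obtain ⟨t, rfl⟩ : ∃ t : ℤˣ, s = Units.map (Int.castRingHom K) t := by
    rcases sq_eq_one_iff.1 hs with h | h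
    · exact ⟨1, by ext; simp [h]⟩
    · exact ⟨-1, by ext; simp [h]⟩
  have hodd := trace_diagRep_modEq_two t (catGL ℤ) w
  have hthree : trace (catGL ℤ ^ σ 1 w).1 = 3 := by
    rcases Int.isUnit_iff.1 hw with h | h <;> rw [h]
    · rw [_root_.zpow_one, trace_catGL]
    · rw [_root_.zpow_neg_one, trace_inv_catGL]
  rw [← map_catGL (Int.castRingHom K), ← map_trace_diagRep, Int.coe_castRingHom, Int.cast_ne_zero]
  intro h
  rw [h, hthree] at hodd
  exact absurd hodd (by decide)

theorem eq_zero_of_conj_of_eq (hn : 1 < n) (hσ : σ 0 R = 0)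
    (hR : ∀ m : ℤ, ¬ IsConj R (FreeGroup.of 1 ^ m)) {k : ℤ} {g : PresentedGroup {R ^ n}}
    (ha : g * .of 0 * g⁻¹ = .of 0 * .of 1 ^ k) (hb : g * .of 1 * g⁻¹ = .of 1) : k = 0 := by
  have hω := Complex.isPrimitiveRoot_exp (2 * n) (by omega)
  set ω := Complex.exp (2 * Real.pi * Complex.I / (2 * n : ℕ))
  have hω0 : ω ≠ 0 := Complex.exp_ne_zero _
  have hne : ω ≠ ω⁻¹ := fun h =>
    hω.pow_ne_one_of_pos_of_lt two_ne_zero (by omega) (by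
      rwa [sq, mul_eq_one_iff_eq_inv₀ hω0])
  have hpow : ω ^ n = ω⁻¹ ^ n := by
    rw [inv_pow, ← mul_eq_one_iff_eq_inv₀ (pow_ne_zero n hω0), ← pow_add, ← two_mul, hω.pow_eq_one]
  obtain ⟨s, -, hs⟩ := exists_diagRep_pow_mem_center hσ hR hω0 hne hpow
  obtain ⟨M, hM⟩ := exists_conj_eq_scalar_mul (diagRep s (catGL ℂ))
    (by simpa only [Set.mem_singleton_iff, forall_eq] using hs) g
  obtain ⟨c, hc⟩ := hM (FreeGroup.of 0) (FreeGroup.of 0 * FreeGroup.of 1 ^ k) ha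
  obtain ⟨d, hd⟩ := hM (FreeGroup.of 1) (FreeGroup.of 1) hb
  exact eq_zero_of_conj_diagOne (by simpa using hc) (by simpa using hd)

theorem exists_shear_trace_eq_zero (hσ : σ 0 R = 0)
    (hR : ∀ m : ℤ, ¬ IsConj R (FreeGroup.of 1 ^ m)) (l : ℤ) :
    ∃ s : ℂˣ, trace (diagRep s (catGL ℂ) (shear (-l) R)).1 = 0 ∧
      diagRep s (catGL ℂ) (shear (-l) (R ^ 2)) ∈ Subgroup.center (GL (Fin 2) ℂ) := by
  have hσ' : σ 0 (shear (-l) R) = 0 := by simp [σ_shear, hσ]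
  have hR' (m : ℤ) : ¬ IsConj (shear (-l) R) (FreeGroup.of 1 ^ m) := fun h => hR m (by
    simpa [shear_shear_neg] using (shear l).map_isConj h)
  obtain ⟨s, htrace, hs⟩ := exists_diagRep_pow_mem_center (n := 2) hσ' hR' Complex.I_ne_zero
    (by norm_num [Complex.ext_iff]) (by simp)
  exact ⟨s, by simpa using htrace, by rwa [map_pow (shear (-l))]⟩

theorem conj_of_one_ne_inv (hn : 1 < n) (hσ : σ 0 R = 0)
    (hR : ∀ m : ℤ, ¬ IsConj R (FreeGroup.of 1 ^ m)) {k : ℤ} {g : PresentedGroup {R ^ n}}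
    (ha : g * .of 0 * g⁻¹ = .of 0 * .of 1 ^ k) : g * .of 1 * g⁻¹ ≠ (.of 1)⁻¹ := by
  intro hb
  have hdvd : (n : ℤ) * σ 1 R ∣ 2 := by
    simpa [σ_inv, σ_of, σ_pow] using
      (σ_modEq_of_conj_mk_eq (u := .of 1) (v := (.of 1)⁻¹) hb 1).symm.dvd
  have hdvdk : (n : ℤ) * σ 1 R ∣ k := by
    simpa [σ_mul, σ_zpow, σ_of, σ_pow] using
      (σ_modEq_of_conj_mk_eq (u := .of 0) (v := .of 0 * .of 1 ^ k) ha 1).dvd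
  obtain rfl : n = 2 := by
    have := Nat.le_of_dvd two_pos (Int.natCast_dvd_natCast.1 ((dvd_mul_right _ _).trans hdvd))
    omega
  have hunit : IsUnit (σ 1 R) :=
    isUnit_of_dvd_one ((mul_dvd_mul_iff_left two_ne_zero).1 (by simpa using hdvd))
  obtain ⟨l, rfl⟩ : 2 ∣ k := (dvd_mul_right _ _).trans hdvdk
  obtain ⟨s, htrace, hs⟩ := exists_shear_trace_eq_zero hσ hR l
  obtain ⟨M, hM⟩ := exists_conj_eq_scalar_mul ((diagRep s (catGL ℂ)).comp (shear (-l)))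
    (by simpa only [Set.mem_singleton_iff, forall_eq, MonoidHom.comp_apply] using hs) g
  have hfix : g * (.of 0 * .of 1 ^ l) * g⁻¹ = .of 0 * .of 1 ^ l := by
    rw [← conj_mul, ← conj_zpow, ha, hb, mul_assoc, _root_.inv_zpow', ← _root_.zpow_add]
    congr 2
    ring
  obtain ⟨c, hc⟩ := hM (FreeGroup.of 0 * FreeGroup.of 1 ^ l) (FreeGroup.of 0 * FreeGroup.of 1 ^ l)
    hfix
  obtain ⟨d, hd⟩ := hM (FreeGroup.of 1) (FreeGroup.of 1)⁻¹ hb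
  exact trace_diagRep_catGL_ne_zero
    (sq_eq_one_of_conj_diagOne (by simpa using hc) (by simpa using hd))
    (by simpa [σ_shear, hσ] using hunit) htrace

theorem eq_one_and_zpow_eq_of_conj (hn : 1 < n) (hσ : σ 0 R = 0) {ε₀ ε₁ k : ℤ}
    (hε₁ : ε₁ = 1 ∨ ε₁ = -1) {g : PresentedGroup {R ^ n}}
    (ha : g * .of 0 * g⁻¹ = .of 0 ^ ε₀ * .of 1 ^ k) (hb : g * .of 1 * g⁻¹ = .of 1 ^ ε₁) :
    ε₀ = 1 ∧ (.of 1 : PresentedGroup {R ^ n}) ^ ε₁ = .of 1 ∧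
      (.of 1 : PresentedGroup {R ^ n}) ^ k = 1 := by
  have hσa (i : Fin 2) :=
    σ_modEq_of_conj_mk_eq (u := .of 0) (v := .of 0 ^ ε₀ * .of 1 ^ k) ha i
  have hσb := σ_modEq_of_conj_mk_eq (u := .of 1) (v := .of 1 ^ ε₁) hb 1
  obtain rfl : ε₀ = 1 := by simpa [σ_mul, σ_zpow, σ_of, σ_pow, hσ, eq_comm] using hσa 0
  refine ⟨rfl, ?_⟩
  by_cases hR : ∃ m : ℤ, IsConj R (FreeGroup.of 1 ^ m)
  · obtain ⟨m, hm⟩ := hR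
    have hm' : IsConj (R ^ n) (FreeGroup.of 1 ^ (m * n)) := by
      rw [_root_.zpow_mul, zpow_natCast]
      exact hm.pow n
    have htors {t : ℤ} (ht : σ 1 (R ^ n) ∣ t) := of_one_zpow_eq_one_of_isConj hm' ht
    refine ⟨?_, htors (by simpa [σ_mul, σ_zpow, σ_of] using (hσa 1).dvd)⟩
    rw [← mul_inv_eq_one, ← _root_.zpow_sub_one]
    exact htors (by simpa [σ_zpow, σ_of] using hσb.dvd)
  · push Not at hR
    rw [_root_.zpow_one] at ha
    rcases hε₁ with rfl | rfl
    · rw [_root_.zpow_one] at hb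
      simp [eq_zero_of_conj_of_eq hn hσ hR ha hb]
    · rw [_root_.zpow_neg_one] at hb
      exact absurd hb (conj_of_one_ne_inv hn hσ hR ha)

theorem conj_eq_one (hn : 1 < n) (hσ : σ 0 R = 0) {ε₀ ε₁ k : ℤ}
    (hε₁ : ε₁ = 1 ∨ ε₁ = -1) {g : PresentedGroup {R ^ n}}
    (ha : g * .of 0 * g⁻¹ = .of 0 ^ ε₀ * .of 1 ^ k) (hb : g * .of 1 * g⁻¹ = .of 1 ^ ε₁) :
    MulAut.conj g = 1 := by
  obtain ⟨rfl, hε, hk⟩ := eq_one_and_zpow_eq_of_conj hn hσ hε₁ ha hb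
  refine MulEquiv.toMonoidHom_injective (PresentedGroup.ext fun i => ?_)
  fin_cases i
  · simpa [hk] using ha
  · simpa [hε] using hb

theorem eq_of_inv_mul_mem_innAut (hn : 1 < n) (hσ : σ 0 R = 0)
    {φ₁ φ₂ : MulAut (PresentedGroup {R ^ n})} {ε₀ ε₁ ε₀' ε₁' i j : ℤ}
    (hε₁ : ε₁ = 1 ∨ ε₁ = -1) (hε₁' : ε₁' = 1 ∨ ε₁' = -1)
    (hφ₁a : φ₁ (.of 0) = .of 0 ^ ε₀ * .of 1 ^ i) (hφ₁b : φ₁ (.of 1) = .of 1 ^ ε₁)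
    (hφ₂a : φ₂ (.of 0) = .of 0 ^ ε₀' * .of 1 ^ j) (hφ₂b : φ₂ (.of 1) = .of 1 ^ ε₁')
    (h : φ₁⁻¹ * φ₂ ∈ innAut (PresentedGroup {R ^ n})) : φ₁ = φ₂ := by
  obtain ⟨g, hg⟩ := h
  have hφ (x) : φ₁ (g * x * g⁻¹) = φ₂ x := by
    rw [← MulAut.conj_apply, hg, ← MulAut.mul_apply, mul_inv_cancel_left]
  have hε : ε₁ * ε₁ = 1 := by rcases hε₁ with rfl | rfl <;> rfl
  obtain rfl : ε₀ = ε₀' := by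
    have hconj : φ₁ g * (.of 0 ^ ε₀ * .of 1 ^ i) * (φ₁ g)⁻¹ = .of 0 ^ ε₀' * .of 1 ^ j := by
      rw [← hφ₁a, ← hφ₂a, ← hφ, map_mul, map_mul, map_inv]
    have := σ_modEq_of_conj_mk_eq (u := .of 0 ^ ε₀ * .of 1 ^ i) (v := .of 0 ^ ε₀' * .of 1 ^ j)
      hconj 0
    simpa [σ_mul, σ_zpow, σ_of, σ_pow, hσ] using this
  have ha : g * .of 0 * g⁻¹ = .of 0 ^ (1 : ℤ) * .of 1 ^ (ε₁ * (j - i)) := by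
    apply φ₁.injective
    rw [hφ, hφ₂a, map_mul, map_zpow, map_zpow, hφ₁a, hφ₁b, _root_.zpow_one, ← _root_.zpow_mul,
      ← mul_assoc, hε, one_mul, mul_assoc, ← _root_.zpow_add, add_sub_cancel]
  have hb : g * .of 1 * g⁻¹ = .of 1 ^ (ε₁ * ε₁') := by
    apply φ₁.injective
    rw [hφ, hφ₂b, map_zpow, hφ₁b, ← _root_.zpow_mul, ← mul_assoc, hε, one_mul]
  have hunit : ε₁ * ε₁' = 1 ∨ ε₁ * ε₁' = -1 :=
    Int.isUnit_iff.1 ((Int.isUnit_iff.2 hε₁).mul (Int.isUnit_iff.2 hε₁'))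
  rw [conj_eq_one hn hσ hunit ha hb] at hg
  exact inv_mul_eq_one.1 hg.symm

end OneRelator

theorem statement_9 (R : FreeGroup (Fin 2)) (n : ℕ) (hn : 1 < n) (hσ : σ 0 R = 0) :
    (∀ (ε₀ ε₁ k : ℤ), (ε₀ = 1 ∨ ε₀ = -1) → (ε₁ = 1 ∨ ε₁ = -1) →
      (∃ g : PresentedGroup ({R ^ n} : Set (FreeGroup (Fin 2))),
        g * PresentedGroup.of 0 * g⁻¹ =
          (PresentedGroup.of (0 : Fin 2) : PresentedGroup ({R ^ n} : Set (FreeGroup (Fin 2)))) ^ ε₀ *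
            PresentedGroup.of (1 : Fin 2) ^ k ∧
        g * PresentedGroup.of 1 * g⁻¹ =
          (PresentedGroup.of (1 : Fin 2) : PresentedGroup ({R ^ n} : Set (FreeGroup (Fin 2)))) ^ ε₁) →
      ε₀ = 1 ∧
        (PresentedGroup.of (1 : Fin 2) : PresentedGroup ({R ^ n} : Set (FreeGroup (Fin 2)))) ^ ε₁ =
          PresentedGroup.of (1 : Fin 2) ∧
        (PresentedGroup.of (1 : Fin 2) : PresentedGroup ({R ^ n} : Set (FreeGroup (Fin 2)))) ^ k = 1) ∧
    (∀ (φ₁ φ₂ : MulAut (PresentedGroup ({R ^ n} : Set (FreeGroup (Fin 2)))))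
        (ε₀ ε₁ ε₀' ε₁' i j : ℤ),
      (ε₀ = 1 ∨ ε₀ = -1) → (ε₁ = 1 ∨ ε₁ = -1) → (ε₀' = 1 ∨ ε₀' = -1) → (ε₁' = 1 ∨ ε₁' = -1) →
      φ₁ (PresentedGroup.of 0) = PresentedGroup.of (0 : Fin 2) ^ ε₀ * PresentedGroup.of (1 : Fin 2) ^ i →
      φ₁ (PresentedGroup.of 1) = PresentedGroup.of (1 : Fin 2) ^ ε₁ →
      φ₂ (PresentedGroup.of 0) = PresentedGroup.of (0 : Fin 2) ^ ε₀' * PresentedGroup.of (1 : Fin 2) ^ j →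
      φ₂ (PresentedGroup.of 1) = PresentedGroup.of (1 : Fin 2) ^ ε₁' →
      φ₁ ≠ φ₂ →
      (QuotientGroup.mk φ₁ : Out (PresentedGroup ({R ^ n} : Set (FreeGroup (Fin 2))))) ≠
        QuotientGroup.mk φ₂) := by
  refine ⟨fun ε₀ ε₁ k _ hε₁ ⟨g, ha, hb⟩ => eq_one_and_zpow_eq_of_conj hn hσ hε₁ ha hb, ?_⟩
  intro φ₁ φ₂ ε₀ ε₁ ε₀' ε₁' i j _ hε₁ _ hε₁' hφ₁a hφ₁b hφ₂a hφ₂b hne heq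
  exact hne (eq_of_inv_mul_mem_innAut hn hσ hε₁ hε₁' hφ₁a hφ₁b hφ₂a hφ₂b (QuotientGroup.eq.1 heq))
end

section
/- Let G = ⟨a, b; bⁿ⟩ with n > 1 (the free product ℤ * Cₙ). Then Out(G) is isomorphic to the semidirect product Dₙ ⋊ Aut(Cₙ), where Aut(Cₙ) commutes with the reflection generator of Dₙ and acts on the rotation subgroup ⟨rotation⟩ ≅ Cₙ as automorphisms in the natural way. In particular |Out(G)| = 2n·φ(n), where φ is Euler's totient function. -/
/-!
By cyclic reduction every torsion element of `ℤ * Cₙ` is conjugate into a factor. Hence an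
automorphism `f` inducing the identity on the quotient `Cₙ` fixes `b` after composition with an
inner automorphism. Write then `f a = b ^ p * t * b ^ q`, where the reduced word of `t` begins and
ends in the factor `ℤ`. The endomorphism `a ↦ t`, `b ↦ b` does not shorten reduced words, so it can
only reach `a` if `t = a ^ (±1)`. Thus `f` is determined modulo inner automorphisms by its action on
the abelianization `ℤ × Cₙ`, which is `a ↦ a ^ s * b ^ i`, `b ↦ b ^ u` with `s = ±1` and
`u ∈ (ℤ/n)ˣ`, and all such triples `(s, i, u)` occur. They multiply as in `Dₙ ⋊ (ℤ/n)ˣ`, where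
`(s, i)` stands for the rotation by `i` if `s = 1` and for a reflection if `s = -1`.
-/

section Words

open Monoid Monoid.CoprodI

variable {ι : Type*} {G : ι → Type*} [∀ i, Group (G i)] {i j k l : ι} {g h : CoprodI G}

open Classical in
/-- The number of letters of the reduced word of an element of a free product. -/
noncomputable def syllableLength (g : CoprodI G) : ℕ := (Word.equiv g).toList.length

/-- `HasEnds i j g` says that the reduced word of `g` is nonempty, starts with a letter from `G i`
and ends with a letter from `G j`. -/
def HasEnds (i j : ι) (g : CoprodI G) : Prop := ∃ w : NeWord G i j, w.prod = g

theorem syllableLength_one : syllableLength (1 : CoprodI G) = 0 := by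
  classical
  exact congrArg (fun w : Word G => w.toList.length) (Word.equiv.apply_symm_apply Word.empty)

theorem syllableLength_neWord_prod (w : NeWord G i j) :
    syllableLength w.prod = w.toList.length := by
  classical
  exact congrArg (fun w : Word G => w.toList.length) (Word.equiv.apply_symm_apply w.toWord)

theorem syllableLength_of {x : G i} (hx : x ≠ 1) : syllableLength (of x) = 1 := by
  rw [← NeWord.prod_singleton x hx, syllableLength_neWord_prod, NeWord.toList,
    List.length_singleton]

theorem syllableLength_of_le_one (x : G i) : syllableLength (of x) ≤ 1 := by
  by_cases hx : x = 1
  · rw [hx, map_one, syllableLength_one]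
    exact zero_le_one
  · exact (syllableLength_of hx).le

theorem hasEnds_of {x : G i} (hx : x ≠ 1) : HasEnds i i (of x) :=
  ⟨.singleton x hx, NeWord.prod_singleton x hx⟩

theorem exists_hasEnds (hg : g ≠ 1) : ∃ i j, HasEnds i j g := by
  classical
  obtain ⟨i, j, w, hw⟩ := NeWord.of_word (Word.equiv g) fun h =>
    hg (Word.equiv.injective (h.trans (Word.equiv.apply_symm_apply Word.empty).symm))
  exact ⟨i, j, w, (congrArg Word.prod hw).trans (Word.equiv.symm_apply_apply g)⟩

namespace HasEnds

theorem mul (hg : HasEnds i j g) (hjk : j ≠ k) (hh : HasEnds k l h) : HasEnds i l (g * h) := by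
  obtain ⟨w, rfl⟩ := hg
  obtain ⟨v, rfl⟩ := hh
  exact ⟨.append w hjk v, NeWord.append_prod⟩

theorem inv (hg : HasEnds i j g) : HasEnds j i g⁻¹ := by
  obtain ⟨w, rfl⟩ := hg
  exact ⟨w.inv, w.inv_prod⟩

theorem syllableLength_mul (hg : HasEnds i j g) (hjk : j ≠ k) (hh : HasEnds k l h) :
    syllableLength (g * h) = syllableLength g + syllableLength h := by
  obtain ⟨w, rfl⟩ := hg
  obtain ⟨v, rfl⟩ := hh
  rw [← NeWord.append_prod (hne := hjk)]
  simp only [syllableLength_neWord_prod, NeWord.toList, List.length_append]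

theorem syllableLength_pos (hg : HasEnds i j g) : 0 < syllableLength g := by
  obtain ⟨w, rfl⟩ := hg
  rw [syllableLength_neWord_prod]
  exact List.length_pos_iff.2 w.toList_ne_nil

theorem ne_one (hg : HasEnds i j g) : g ≠ 1 := by
  rintro rfl
  exact hg.syllableLength_pos.ne' syllableLength_one

theorem eq_of_or_eq_of_mul (hg : HasEnds i j g) :
    (i = j ∧ ∃ x : G i, x ≠ 1 ∧ g = of x) ∨
      ∃ (k : ι) (x : G i) (u : CoprodI G), x ≠ 1 ∧ i ≠ k ∧ HasEnds k j u ∧ g = of x * u := by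
  obtain ⟨w, rfl⟩ := hg
  induction w with
  | singleton x hx => exact .inl ⟨rfl, x, hx, NeWord.prod_singleton x hx⟩
  | append w₁ hne w₂ ih₁ _ =>
    right
    rw [NeWord.append_prod]
    rcases ih₁ with ⟨rfl, x, hx, h⟩ | ⟨m, x, u, hx, hm, hu, h⟩
    · exact ⟨_, x, w₂.prod, hx, hne, ⟨w₂, rfl⟩, by rw [h]⟩
    · exact ⟨m, x, u * w₂.prod, hx, hm, hu.mul hne ⟨w₂, rfl⟩, by rw [h, mul_assoc]⟩

theorem eq_of_or_eq_mul_of (hg : HasEnds i j g) :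
    (i = j ∧ ∃ y : G j, y ≠ 1 ∧ g = of y) ∨
      ∃ (k : ι) (u : CoprodI G) (y : G j), y ≠ 1 ∧ k ≠ j ∧ HasEnds i k u ∧ g = u * of y := by
  rcases hg.inv.eq_of_or_eq_of_mul with ⟨hji, x, hx, h⟩ | ⟨k, x, u, hx, hjk, hu, h⟩
  · exact .inl ⟨hji.symm, x⁻¹, inv_ne_one.2 hx, by rw [map_inv, ← h, inv_inv]⟩
  · refine .inr ⟨k, u⁻¹, x⁻¹, inv_ne_one.2 hx, hjk.symm, hu.inv, ?_⟩
    rw [map_inv, ← mul_inv_rev, ← h, inv_inv]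

theorem eq_of_or_eq_of_mul_mul_of (hg : HasEnds i i g) :
    (∃ x : G i, x ≠ 1 ∧ g = of x) ∨
      ∃ (j k : ι) (x y : G i) (u : CoprodI G), x ≠ 1 ∧ y ≠ 1 ∧ i ≠ j ∧ k ≠ i ∧
        HasEnds j k u ∧ g = of x * u * of y := by
  rcases hg.eq_of_or_eq_of_mul with ⟨-, h⟩ | ⟨j, x, v, hx, hij, hv, rfl⟩
  · exact .inl h
  rcases hv.eq_of_or_eq_mul_of with ⟨hji, -⟩ | ⟨k, u, y, hy, hki, hu, rfl⟩
  · exact absurd hji.symm hij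
  · exact .inr ⟨j, k, x, y, u, hx, hy, hij, hki, hu, (mul_assoc ..).symm⟩

theorem exists_eq_of_of_syllableLength_le_one (hg : HasEnds i j g) (hlen : syllableLength g ≤ 1) :
    ∃ x : G i, g = of x := by
  rcases hg.eq_of_or_eq_of_mul with ⟨-, x, -, h⟩ | ⟨k, x, u, hx, hik, hu, rfl⟩
  · exact ⟨x, h⟩
  · have := hu.syllableLength_pos
    rw [(hasEnds_of hx).syllableLength_mul hik hu, syllableLength_of hx] at hlen
    omega

/-- Induction along cyclic reduction, which conjugates away the two ends of a word as long as they
cancel. -/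
@[elab_as_elim]
theorem conj_induction {motive : ∀ {i j : ι} {g : CoprodI G}, HasEnds i j g → Prop}
    (letter : ∀ {i} {x : G i} (hx : x ≠ 1), motive (hasEnds_of hx))
    (ne : ∀ {i j} {g : CoprodI G} (hg : HasEnds i j g), i ≠ j → motive hg)
    (mul : ∀ {i j k} {x y : G i} {u : CoprodI G} (hg : HasEnds i i (of x * u * of y)),
      x ≠ 1 → y ≠ 1 → y * x ≠ 1 → i ≠ j → k ≠ i → HasEnds j k u → motive hg)
    (conj : ∀ {i j k} {x : G i} {u : CoprodI G} (hg : HasEnds i i (of x * u * (of x)⁻¹)),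
      x ≠ 1 → i ≠ j → k ≠ i → ∀ hu : HasEnds j k u, motive hu → motive hg)
    (hg : HasEnds i j g) : motive hg := by
  induction hlen : syllableLength g using Nat.strong_induction_on generalizing i j g with
  | _ N ih =>
  by_cases hij : i = j
  swap
  · exact ne hg hij
  subst hij
  rcases hg.eq_of_or_eq_of_mul_mul_of with ⟨x, hx, rfl⟩ | ⟨j, k, x, y, u, hx, hy, hij, hki, hu, rfl⟩
  · exact letter hx
  by_cases hyx : y * x = 1
  swap
  · exact mul hg hx hy hyx hij hki hu
  obtain rfl : y = x⁻¹ := eq_inv_of_mul_eq_one_left hyx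
  have hlt : syllableLength u < N := by
    rw [← hlen, ((hasEnds_of hx).mul hij hu).syllableLength_mul hki (hasEnds_of hy),
      (hasEnds_of hx).syllableLength_mul hij hu, syllableLength_of hx]
    omega
  simp only [map_inv] at hg ⊢
  exact conj hg hx hij hki hu (ih _ hlt hu rfl)

theorem pow_succ_of_ne (hg : HasEnds i j g) (hij : i ≠ j) (m : ℕ) : HasEnds i j (g ^ (m + 1)) := by
  induction m with
  | zero => rwa [zero_add, pow_one]
  | succ m ih => rw [pow_succ]; exact ih.mul hij.symm hg

theorem mul_of_mul_pow (hg : HasEnds i j g) {z : G k} (hz : z ≠ 1) (hjk : j ≠ k) (hki : k ≠ i)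
    (m : ℕ) : HasEnds i j (g * (of z * g) ^ m) := by
  induction m with
  | zero => rwa [pow_zero, mul_one]
  | succ m ih =>
    rw [pow_succ, ← mul_assoc, ← mul_assoc]
    exact (ih.mul hjk (hasEnds_of hz)).mul hki hg

theorem pow (hg : HasEnds i j g) (m : ℕ) : g ^ m = 1 ∨ HasEnds i j (g ^ m) := by
  cases m with
  | zero => exact .inl (pow_zero g)
  | succ m =>
  induction hg using conj_induction with
  | @letter i x hx =>
    rw [← map_pow]
    by_cases hxm : x ^ (m + 1) = 1
    · exact .inl (by rw [hxm, map_one])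
    · exact .inr (hasEnds_of hxm)
  | ne hg hij => exact .inr (hg.pow_succ_of_ne hij m)
  | @mul i j k x y u _ hx hy hyx hij hki hu =>
    right
    have hpow : (of x * u * of y) ^ (m + 1) = of x * (u * (of (y * x) * u) ^ m) * of y := by
      rw [pow_succ, ← mul_assoc _ (of x * u), mul_pow_mul, map_mul]
      simp only [mul_assoc]
    rw [hpow]
    exact ((hasEnds_of hx).mul hij (hu.mul_of_mul_pow hyx hki hij m)).mul hki (hasEnds_of hy)
  | @conj i j k x u _ hx hij hki _ ih =>
    rw [conj_pow]
    refine ih.imp (fun hum => ?_) fun hum => ?_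
    · rw [hum, mul_one, mul_inv_cancel]
    · exact ((hasEnds_of hx).mul hij hum).mul hki (hasEnds_of hx).inv

theorem zpow (hg : HasEnds i i g) (m : ℤ) : g ^ m = 1 ∨ HasEnds i i (g ^ m) := by
  obtain ⟨m, rfl | rfl⟩ := m.eq_nat_or_neg
  · rw [zpow_natCast]
    exact hg.pow m
  · rw [zpow_neg, zpow_natCast]
    exact (hg.pow m).imp inv_eq_one.2 inv

theorem exists_isConj (hg : HasEnds i j g) :
    (∃ (k : ι) (x : G k), IsConj (of x) g) ∨
      ∃ (k l : ι) (c : CoprodI G), k ≠ l ∧ HasEnds k l c ∧ IsConj c g := by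
  induction hg using conj_induction with
  | @letter i x _ => exact .inl ⟨i, x, .refl _⟩
  | ne hg hij => exact .inr ⟨_, _, _, hij, hg, .refl _⟩
  | @mul i j k x y u _ _ _ hyx hij hki hu =>
    refine .inr ⟨j, i, u * of (y * x), hij.symm, hu.mul hki (hasEnds_of hyx),
      isConj_iff.2 ⟨of x, ?_⟩⟩
    simp only [map_mul, mul_assoc, mul_inv_cancel, mul_one]
  | @conj i _ _ x u _ _ _ _ _ ih =>
    have hconj : IsConj u (of x * u * (of x)⁻¹) := isConj_iff.2 ⟨of x, rfl⟩
    exact ih.imp (fun ⟨k, y, h⟩ => ⟨k, y, h.trans hconj⟩)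
      fun ⟨k, l, c, hkl, hc, h⟩ => ⟨k, l, c, hkl, hc, h.trans hconj⟩

theorem exists_eq_mul_of (hg : HasEnds i j g) (hik : i ≠ k) :
    ∃ (l : ι) (u : CoprodI G) (y : G k), l ≠ k ∧ HasEnds i l u ∧ g = u * of y := by
  by_cases hjk : j = k
  swap
  · exact ⟨j, g, 1, hjk, hg, by rw [map_one, mul_one]⟩
  subst hjk
  rcases hg.eq_of_or_eq_mul_of with ⟨hij, -⟩ | ⟨l, u, y, -, hlj, hu, h⟩
  · exact absurd hij hik
  · exact ⟨l, u, y, hlj, hu, h⟩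

theorem exists_isConj_of_of_pow_eq_one (hg : HasEnds i j g) {m : ℕ} (hm : m ≠ 0)
    (hgm : g ^ m = 1) : ∃ (k : ι) (x : G k), IsConj (of x) g := by
  refine hg.exists_isConj.resolve_right fun ⟨k, l, c, hkl, hc, hcg⟩ => ?_
  obtain ⟨m, rfl⟩ := Nat.exists_eq_succ_of_ne_zero hm
  refine (hc.pow_succ_of_ne hkl m).ne_one (isConj_one_left.1 ?_)
  exact hgm ▸ hcg.pow (m + 1)

end HasEnds

theorem exists_eq_of_mul_mul_of (k : ι) (g : CoprodI G) :
    ∃ (x y : G k) (u : CoprodI G), g = of x * u * of y ∧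
      (u = 1 ∨ ∃ i j, i ≠ k ∧ j ≠ k ∧ HasEnds i j u) := by
  by_cases hg1 : g = 1
  · exact ⟨1, 1, 1, by rw [hg1, map_one, mul_one, mul_one], .inl rfl⟩
  obtain ⟨i, j, hg⟩ := exists_hasEnds hg1
  by_cases hik : i = k
  · subst hik
    rcases hg.eq_of_or_eq_of_mul with ⟨-, x, -, rfl⟩ | ⟨l, x, v, -, hil, hv, rfl⟩
    · exact ⟨x, 1, 1, by rw [map_one, mul_one, mul_one], .inl rfl⟩
    · obtain ⟨m, u, y, hmi, hu, rfl⟩ := hv.exists_eq_mul_of hil.symm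
      exact ⟨x, y, u, (mul_assoc ..).symm, .inr ⟨l, m, hil.symm, hmi, hu⟩⟩
  · obtain ⟨m, u, y, hmk, hu, rfl⟩ := hg.exists_eq_mul_of hik
    exact ⟨1, y, u, by rw [map_one, one_mul], .inr ⟨i, m, hik, hmk, hu⟩⟩

section Map

variable {G' : ι → Type*} [∀ i, Group (G' i)] {φ : CoprodI G →* CoprodI G'}

theorem HasEnds.map_and_syllableLength_le_map
    (hφ : ∀ i (x : G i), x ≠ 1 → HasEnds i i (φ (of x))) (hg : HasEnds i j g) :
    HasEnds i j (φ g) ∧ syllableLength g ≤ syllableLength (φ g) := by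
  obtain ⟨w, rfl⟩ := hg
  induction w with
  | @singleton i x hx =>
    rw [NeWord.prod_singleton, syllableLength_of hx]
    exact ⟨hφ i x hx, (hφ i x hx).syllableLength_pos⟩
  | append w₁ hne w₂ ih₁ ih₂ =>
    rw [NeWord.append_prod, map_mul, HasEnds.syllableLength_mul ⟨w₁, rfl⟩ hne ⟨w₂, rfl⟩,
      ih₁.1.syllableLength_mul hne ih₂.1]
    exact ⟨ih₁.1.mul hne ih₂.1, add_le_add ih₁.2 ih₂.2⟩

theorem exists_eq_of_of_map_eq_of [Nonempty ι]
    (hφ : ∀ i (x : G i), x ≠ 1 → HasEnds i i (φ (of x))) {x : G' i} (hg : φ g = of x) :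
    ∃ (j : ι) (y : G j), g = of y := by
  by_cases hg1 : g = 1
  · exact ⟨Classical.arbitrary ι, 1, by rw [hg1, map_one]⟩
  obtain ⟨j, k, hjk⟩ := exists_hasEnds hg1
  refine ⟨j, hjk.exists_eq_of_of_syllableLength_le_one ?_⟩
  calc syllableLength g ≤ syllableLength (φ g) := (hjk.map_and_syllableLength_le_map hφ).2
    _ = syllableLength (of x) := by rw [hg]
    _ ≤ 1 := syllableLength_of_le_one x

end Map

end Words

section Coprod

open Monoid Monoid.Coprod

universe u

/-- The two factors of `A ∗ H` as a family, so that the reduced words of `Monoid.CoprodI` become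
available for `A ∗ H`. -/
def Factor (A H : Type u) : Fin 2 → Type u
  | 0 => A
  | 1 => H

instance (A H : Type u) [Group A] [Group H] : ∀ i, Group (Factor A H i)
  | 0 => inferInstanceAs (Group A)
  | 1 => inferInstanceAs (Group H)

variable {A H : Type u} [Group A] [Group H]

/-- The identification of the binary free product with the free product of the family `Factor`. -/
def coprodEquivCoprodI : A ∗ H ≃* CoprodI (Factor A H) :=
  MonoidHom.toMulEquiv
    (Coprod.lift (CoprodI.of (M := Factor A H) (i := 0)) (CoprodI.of (M := Factor A H) (i := 1)))
    (CoprodI.lift fun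
      | 0 => inl
      | 1 => inr)
    (Coprod.hom_ext rfl rfl)
    (CoprodI.ext_hom _ _ fun
      | 0 => rfl
      | 1 => rfl)

theorem exists_isConj_inl_or_inr_of_pow_eq_one {g : A ∗ H} {m : ℕ} (hm : m ≠ 0) (hg : g ^ m = 1) :
    (∃ x : A, IsConj (inl x) g) ∨ ∃ y : H, IsConj (inr y) g := by
  by_cases hg1 : g = 1
  · exact .inl ⟨1, by rw [hg1, map_one]⟩
  obtain ⟨i, j, hij⟩ := exists_hasEnds ((map_ne_one_iff _ coprodEquivCoprodI.injective).2 hg1)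
  obtain ⟨k, x, hx⟩ := hij.exists_isConj_of_of_pow_eq_one hm (by rw [← map_pow, hg, map_one])
  have hxg : IsConj (coprodEquivCoprodI.symm (CoprodI.of x)) g := by
    rw [← coprodEquivCoprodI.symm_apply_apply g]
    exact coprodEquivCoprodI.symm.toMonoidHom.map_isConj hx
  match k with
  | 0 => exact .inl ⟨x, hxg⟩
  | 1 => exact .inr ⟨x, hxg⟩

theorem isConj_inr_snd_of_pow_eq_one {H : Type u} [CommGroup H] [IsMulTorsionFree A] {g : A ∗ H}
    {m : ℕ} (hm : m ≠ 0) (hg : g ^ m = 1) : IsConj (inr (snd g)) g := by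
  rcases exists_isConj_inl_or_inr_of_pow_eq_one hm hg with ⟨x, hx⟩ | ⟨y, hy⟩
  · have hxm : (inl (x ^ m) : A ∗ H) = 1 := by
      rw [map_pow, ← isConj_one_left, ← hg]
      exact hx.pow m
    have hx1 : x = 1 := (pow_eq_one_iff_left hm).1 (inl_injective (hxm.trans (map_one _).symm))
    rw [hx1, map_one, isConj_one_right] at hx
    rw [hx, map_one, map_one]
  · have hsnd : y = snd g := by
      simpa only [snd_apply_inr, isConj_iff_eq] using snd.map_isConj hy
    rwa [← hsnd]

theorem exists_eq_inr_mul_mul_inr (g : A ∗ H) :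
    ∃ (p q : H) (t : A ∗ H), g = inr p * t * inr q ∧
      (t = 1 ∨ HasEnds 0 0 (coprodEquivCoprodI t)) := by
  obtain ⟨p, q, t, hg, ht⟩ := exists_eq_of_mul_mul_of 1 (coprodEquivCoprodI g)
  refine ⟨p, q, coprodEquivCoprodI.symm t, ?_, ht.imp (fun h => by rw [h, map_one]) ?_⟩
  · rw [← coprodEquivCoprodI.symm_apply_apply g, hg, map_mul, map_mul]
    rfl
  · rintro ⟨i, j, hi, hj, h⟩
    obtain rfl : i = 0 := by omega
    obtain rfl : j = 0 := by omega
    rwa [MulEquiv.apply_symm_apply]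

end Coprod

section InfiniteCyclicFactor

open Monoid Monoid.Coprod Multiplicative

variable {H : Type} [Group H] {t : Multiplicative ℤ ∗ H}

/-- The endomorphism of `ℤ ∗ H` which fixes `H` and sends the generator of `ℤ` to `t`. -/
def substHom (t : Multiplicative ℤ ∗ H) : Multiplicative ℤ ∗ H →* Multiplicative ℤ ∗ H :=
  Coprod.lift (zpowersHom _ t) inr

@[simp]
theorem substHom_inl (t : Multiplicative ℤ ∗ H) (x : Multiplicative ℤ) :
    substHom t (inl x) = t ^ toAdd x :=
  Coprod.lift_apply_inl ..

@[simp]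
theorem substHom_inr (t : Multiplicative ℤ ∗ H) (y : H) : substHom t (inr y) = inr y :=
  Coprod.lift_apply_inr ..

theorem eq_substHom {φ : Multiplicative ℤ ∗ H →* Multiplicative ℤ ∗ H}
    (hφ : ∀ y, φ (inr y) = inr y) : φ = substHom (φ (inl (ofAdd 1))) := by
  refine Coprod.hom_ext (MonoidHom.ext_mint ?_) (MonoidHom.ext fun y => ?_)
  · simp only [MonoidHom.comp_apply, substHom_inl, toAdd_ofAdd, zpow_one]
  · simp only [MonoidHom.comp_apply, substHom_inr, hφ]

theorem substHom_comp_substHom (t u : Multiplicative ℤ ∗ H) :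
    (substHom t).comp (substHom u) = substHom (substHom t u) := by
  rw [eq_substHom (φ := (substHom t).comp (substHom u)) fun y => by simp]
  simp only [MonoidHom.comp_apply, substHom_inl, toAdd_ofAdd, zpow_one]

theorem substHom_inl_ofAdd_one : substHom (inl (ofAdd 1) : Multiplicative ℤ ∗ H) = .id _ :=
  (eq_substHom (φ := .id _) fun _ => rfl).symm

/-- The automorphism of `ℤ ∗ H` which fixes `H` and multiplies the generator of `ℤ` by `y : H` on
the right. -/
def translation (y : H) : MulAut (Multiplicative ℤ ∗ H) :=
  MonoidHom.toMulEquiv (substHom (inl (ofAdd 1) * inr y)) (substHom (inl (ofAdd 1) * inr y⁻¹))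
    (by simp [substHom_comp_substHom, substHom_inl_ofAdd_one, mul_assoc])
    (by simp [substHom_comp_substHom, substHom_inl_ofAdd_one, mul_assoc])

theorem translation_apply (y : H) (g : Multiplicative ℤ ∗ H) :
    translation y g = substHom (inl (ofAdd 1) * inr y) g :=
  rfl

theorem toAdd_fst_substHom (t g : Multiplicative ℤ ∗ H) :
    toAdd (fst (substHom t g)) = toAdd (fst t) * toAdd (fst g) := by
  have h : fst.comp (substHom t) = (zpowersHom _ (fst t)).comp fst :=
    Coprod.hom_ext (by ext; simp) (by ext; simp)
  simpa [mul_comm] using congrArg toAdd (DFunLike.congr_fun h g)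

theorem zpow_ne_one_of_fst_ne_one (hfst : fst t ≠ 1) {m : ℤ} (hm : m ≠ 0) : t ^ m ≠ 1 := fun h =>
  hfst ((IsMulTorsionFree.zpow_eq_one_iff_left hm).1 (by rw [← map_zpow, h, map_one]))

theorem hasEnds_substHom_letter (ht : HasEnds 0 0 (coprodEquivCoprodI t)) (hfst : fst t ≠ 1) :
    ∀ (i : Fin 2) (x : Factor (Multiplicative ℤ) H i), x ≠ 1 →
      HasEnds i i (coprodEquivCoprodI (substHom t (coprodEquivCoprodI.symm (CoprodI.of x))))
  | 0, x, hx => by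
    have himage : coprodEquivCoprodI (substHom t (coprodEquivCoprodI.symm (CoprodI.of x))) =
        coprodEquivCoprodI t ^ toAdd (α := ℤ) x :=
      (congrArg _ (substHom_inl t x)).trans (map_zpow ..)
    rw [himage]
    refine (ht.zpow _).resolve_left ?_
    rw [← map_zpow, map_eq_one_iff _ coprodEquivCoprodI.injective]
    exact zpow_ne_one_of_fst_ne_one hfst hx
  | 1, _, hx => hasEnds_of hx

theorem exists_eq_inl_or_inr_of_substHom_eq_inl (ht : HasEnds 0 0 (coprodEquivCoprodI t))
    (hfst : fst t ≠ 1) {g : Multiplicative ℤ ∗ H} {x : Multiplicative ℤ}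
    (hg : substHom t g = inl x) : (∃ z, g = inl z) ∨ ∃ y, g = inr y := by
  let φ : CoprodI (Factor (Multiplicative ℤ) H) →* CoprodI (Factor (Multiplicative ℤ) H) :=
    (coprodEquivCoprodI.toMonoidHom.comp (substHom t)).comp coprodEquivCoprodI.symm.toMonoidHom
  have hφg : φ (coprodEquivCoprodI g) = CoprodI.of (M := Factor (Multiplicative ℤ) H) (i := 0) x :=
    congrArg coprodEquivCoprodI
      ((congrArg (substHom t) (coprodEquivCoprodI.symm_apply_apply g)).trans hg)
  obtain ⟨i, z, hz⟩ := exists_eq_of_of_map_eq_of (hasEnds_substHom_letter ht hfst) hφg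
  match i with
  | 0 => exact .inl ⟨z, coprodEquivCoprodI.injective hz⟩
  | 1 => exact .inr ⟨z, coprodEquivCoprodI.injective hz⟩

theorem exists_eq_inl_of_surjective_substHom (ht : t = 1 ∨ HasEnds 0 0 (coprodEquivCoprodI t))
    (hsurj : Function.Surjective (substHom t)) : ∃ s : ℤˣ, t = inl (ofAdd (s : ℤ)) := by
  obtain ⟨g, hg⟩ := hsurj (inl (ofAdd 1))
  have hmul : toAdd (fst t) * toAdd (fst g) = 1 := by
    rw [← toAdd_fst_substHom, hg, fst_apply_inl, toAdd_ofAdd]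
  have hfst : fst t ≠ 1 := fun h => by simp [h] at hmul
  have hends : HasEnds 0 0 (coprodEquivCoprodI t) :=
    ht.resolve_left fun h => hfst (by rw [h, map_one])
  rcases exists_eq_inl_or_inr_of_substHom_eq_inl hends hfst hg with ⟨z, rfl⟩ | ⟨y, rfl⟩
  · rw [fst_apply_inl] at hmul
    obtain ⟨s, hs⟩ := IsUnit.of_mul_eq_one_right _ hmul
    rw [substHom_inl, ← hs] at hg
    refine ⟨s, ?_⟩
    calc t = (t ^ (s : ℤ)) ^ (s : ℤ) := by
          rw [← zpow_mul, ← Units.val_mul, Int.units_mul_self, Units.val_one, zpow_one]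
      _ = inl (ofAdd (s : ℤ)) := by
          rw [hg, ← map_zpow, ← ofAdd_zsmul, smul_eq_mul, mul_one]
  · simp at hmul

theorem exists_apply_inl_eq_of_surjective {φ : Multiplicative ℤ ∗ H →* Multiplicative ℤ ∗ H}
    (hsurj : Function.Surjective φ) (hφ : ∀ y, φ (inr y) = inr y) :
    ∃ (p q : H) (s : ℤˣ), φ (inl (ofAdd 1)) = inr p * inl (ofAdd (s : ℤ)) * inr q := by
  obtain ⟨p, q, t, hpq, ht⟩ := exists_eq_inr_mul_mul_inr (φ (inl (ofAdd 1)))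
  have hcomp : φ = (substHom t).comp (substHom (inr p * inl (ofAdd 1) * inr q)) := by
    rw [eq_substHom hφ, hpq, substHom_comp_substHom]
    simp
  rw [hcomp, MonoidHom.coe_comp] at hsurj
  obtain ⟨s, rfl⟩ := exists_eq_inl_of_surjective_substHom ht hsurj.of_comp
  exact ⟨p, q, s, hpq⟩

end InfiniteCyclicFactor

/-- The element of the dihedral group with sign `s` and rotation parameter `i`: a rotation if
`s = 1` and a reflection if `s = -1`. -/
def dihedralOf {n : ℕ} (s : ℤˣ) (i : ZMod n) : DihedralGroup n :=
  if s = 1 then .r i else .sr i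

section Dihedral

open DihedralGroup

variable {n : ℕ}

@[simp]
theorem dihedralOf_one (i : ZMod n) : dihedralOf 1 i = r i :=
  if_pos rfl

@[simp]
theorem dihedralOf_neg_one (i : ZMod n) : dihedralOf (-1) i = sr i :=
  if_neg (by decide)

theorem dihedralOf_mul_dihedralOf (s t : ℤˣ) (i j : ZMod n) :
    dihedralOf s i * dihedralOf t j = dihedralOf (s * t) (i * ((t : ℤ) : ZMod n) + j) := by
  rcases Int.units_eq_one_or s with rfl | rfl <;> rcases Int.units_eq_one_or t with rfl | rfl <;>
    simp [neg_add_eq_sub]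

theorem dihedralOf_eq_one_iff {s : ℤˣ} {i : ZMod n} : dihedralOf s i = 1 ↔ s = 1 ∧ i = 0 := by
  rcases Int.units_eq_one_or s with rfl | rfl <;> simp [one_def, -r_zero]

theorem exists_dihedralOf_eq (d : DihedralGroup n) :
    ∃ (s : ℤˣ) (i : ZMod n), dihedralOf s i = d := by
  rcases d with i | i
  · exact ⟨1, i, dihedralOf_one i⟩
  · exact ⟨-1, i, dihedralOf_neg_one i⟩

/-- The action of `Aut(Cₙ) = (ℤ/n)ˣ` on `Dₙ` by multiplication on the rotation subgroup, fixing the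
reflection `sr 0`. -/
def dihedralUnitsAction (n : ℕ) : (ZMod n)ˣ →* MulAut (DihedralGroup n) where
  toFun u :=
    { toFun := fun
        | r i => r (u * i)
        | sr i => sr (u * i)
      invFun := fun
        | r i => r (↑u⁻¹ * i)
        | sr i => sr (↑u⁻¹ * i)
      left_inv := by rintro (i | i) <;> simp
      right_inv := by rintro (i | i) <;> simp
      map_mul' := by rintro (i | i) (j | j) <;> simp [mul_add, mul_sub] }
  map_one' := by ext (i | i) <;> simp
  map_mul' u v := by ext (i | i) <;> simp [mul_assoc]

theorem dihedralUnitsAction_dihedralOf (u : (ZMod n)ˣ) (s : ℤˣ) (i : ZMod n) :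
    dihedralUnitsAction n u (dihedralOf s i) = dihedralOf s ((u : ZMod n) * i) := by
  rcases Int.units_eq_one_or s with rfl | rfl <;> simp [dihedralUnitsAction]

end Dihedral

theorem map_eq_one_of_finite_of_isMulTorsionFree {H M : Type*} [Group H] [Finite H] [Monoid M]
    [IsMulTorsionFree M] (f : H →* M) (y : H) : f y = 1 := by
  refine (pow_eq_one_iff_left (Nat.card_pos (α := H)).ne').1 ?_
  rw [← map_pow, pow_card_eq_one', map_one]

open scoped Monoid.Coprod in
/-- The free product `ℤ * Cₙ`. -/
abbrev IntStarCyclic (n : ℕ) : Type := Multiplicative ℤ ∗ Multiplicative (ZMod n)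

namespace IntStarCyclic

open Monoid.Coprod Multiplicative

variable {n : ℕ}

/-- The generator of the infinite cyclic factor. -/
abbrev a : IntStarCyclic n := inl (ofAdd 1)

/-- The generator of the factor of order `n`. -/
abbrev b : IntStarCyclic n := inr (ofAdd 1)

theorem b_pow : (b : IntStarCyclic n) ^ n = 1 := by
  rw [← map_pow, ← ofAdd_nsmul]
  simp

theorem exists_inr_eq_b_zpow (y : Multiplicative (ZMod n)) :
    ∃ k : ℤ, (inr y : IntStarCyclic n) = b ^ k := by
  obtain ⟨k, hk⟩ := ZMod.intCast_surjective (toAdd y)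
  exact ⟨k, by rw [← map_zpow, ← ofAdd_zsmul, zsmul_one, hk, ofAdd_toAdd]⟩

theorem hom_ext {K : Type*} [Group K] {f g : IntStarCyclic n →* K} (ha : f a = g a)
    (hb : f b = g b) : f = g := by
  refine Monoid.Coprod.hom_ext (MonoidHom.ext_mint ha) (MonoidHom.ext fun y => ?_)
  obtain ⟨k, hk⟩ := exists_inr_eq_b_zpow y
  rw [MonoidHom.comp_apply, MonoidHom.comp_apply, hk, map_zpow, hb, map_zpow]

/-- The homomorphism to `K` with `a ↦ x` and `b ↦ y`. -/
def lift {K : Type*} [Group K] (x y : K) (hy : y ^ n = 1) : IntStarCyclic n →* K :=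
  Monoid.Coprod.lift (zpowersHom K x) (ZMod.lift n
    ⟨zmultiplesHom (Additive K) (.ofMul y), by simpa [← ofMul_pow] using hy⟩).toMultiplicativeLeft

theorem lift_a {K : Type*} [Group K] (x y : K) (hy : y ^ n = 1) : lift x y hy a = x := by
  simp [lift]

theorem lift_b {K : Type*} [Group K] (x y : K) (hy : y ^ n = 1) : lift x y hy b = y := by
  rw [lift, Monoid.Coprod.lift_apply_inr, AddMonoidHom.toMultiplicativeLeft_apply_apply,
    toAdd_ofAdd, ← Int.cast_one, ZMod.lift_coe]
  simp

/-- The automorphism `a ↦ a ^ s`, `b ↦ b ^ u`. -/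
def scaling (s : ℤˣ) (u : (ZMod n)ˣ) : MulAut (IntStarCyclic n) :=
  MulEquiv.coprodCongr (DistribMulAction.toAddEquiv ℤ s).toMultiplicative
    (DistribMulAction.toAddEquiv (ZMod n) u).toMultiplicative

theorem toAdd_snd_apply (f : IntStarCyclic n →* IntStarCyclic n) (g : IntStarCyclic n) :
    toAdd (snd (f g)) =
      toAdd (snd (f a)) * (toAdd (fst g) : ℤ) + toAdd (snd (f b)) * toAdd (snd g) := by
  have h : snd.comp f = (zpowersHom _ (snd (f a))).comp fst *
      (AddMonoidHom.mulLeft (toAdd (snd (f b)))).toMultiplicative.comp snd :=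
    hom_ext (by simp) (by simp)
  simpa [mul_comm, add_comm] using congrArg toAdd (DFunLike.congr_fun h g)

section Invariants

variable [NeZero n]

theorem fst_apply_inr (f : IntStarCyclic n →* IntStarCyclic n) (y : Multiplicative (ZMod n)) :
    fst (f (inr y)) = 1 :=
  map_eq_one_of_finite_of_isMulTorsionFree (fst.comp (f.comp inr)) y

theorem toAdd_fst_apply (f : IntStarCyclic n →* IntStarCyclic n) (g : IntStarCyclic n) :
    toAdd (fst (f g)) = toAdd (fst (f a)) * toAdd (fst g) := by
  have h : fst.comp f = (zpowersHom _ (fst (f a))).comp fst :=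
    hom_ext (by simp) (by simp [fst_apply_inr])
  simpa [mul_comm] using congrArg toAdd (DFunLike.congr_fun h g)

/-- The action of an automorphism on the quotient `ℤ` of `ℤ * Cₙ`. -/
def sign : MulAut (IntStarCyclic n) →* ℤˣ :=
  MonoidHom.toHomUnits
    { toFun := fun f => toAdd (fst (f a))
      map_one' := rfl
      map_mul' := fun f g => toAdd_fst_apply f.toMonoidHom (g a) }

/-- The action of an automorphism on the quotient `Cₙ` of `ℤ * Cₙ`. -/
def mult : MulAut (IntStarCyclic n) →* (ZMod n)ˣ :=
  MonoidHom.toHomUnits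
    { toFun := fun f => toAdd (snd (f b))
      map_one' := rfl
      map_mul' := fun f g => by
        have := toAdd_snd_apply f.toMonoidHom (g b)
        simpa [show fst (g b) = 1 from fst_apply_inr g.toMonoidHom _] using this }

/-- The exponent of `b` in the image of `a` in the abelianization. -/
def shift (f : MulAut (IntStarCyclic n)) : ZMod n := toAdd (snd (f a))

theorem coe_sign (f : MulAut (IntStarCyclic n)) : (sign f : ℤ) = toAdd (fst (f a)) :=
  rfl

theorem coe_mult (f : MulAut (IntStarCyclic n)) : (mult f : ZMod n) = toAdd (snd (f b)) :=
  rfl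

theorem shift_mul (f g : MulAut (IntStarCyclic n)) :
    shift (f * g) = shift f * ((sign g : ℤ) : ZMod n) + mult f * shift g :=
  toAdd_snd_apply f.toMonoidHom (g a)

/-- The homomorphism to `Dₙ ⋊ Aut(Cₙ)` recording the action on the abelianization. -/
def toSemidirect :
    MulAut (IntStarCyclic n) →* DihedralGroup n ⋊[dihedralUnitsAction n] (ZMod n)ˣ where
  toFun f := ⟨dihedralOf (sign f) (shift f), mult f⟩
  map_one' := by
    ext : 1
    · rw [map_one]
      exact dihedralOf_one 0
    · exact map_one mult
  map_mul' f g := by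
    ext : 1
    · simp only [SemidirectProduct.mul_left, dihedralUnitsAction_dihedralOf,
        dihedralOf_mul_dihedralOf, map_mul, shift_mul]
    · exact map_mul mult f g

theorem toSemidirect_eq_one_iff {f : MulAut (IntStarCyclic n)} :
    toSemidirect f = 1 ↔ (sign f = 1 ∧ shift f = 0) ∧ mult f = 1 := by
  rw [SemidirectProduct.ext_iff]
  exact and_congr dihedralOf_eq_one_iff Iff.rfl

theorem toSemidirect_conj (g : IntStarCyclic n) : toSemidirect (MulAut.conj g) = 1 := by
  refine (toSemidirect_eq_one_iff (n := n)).2 ⟨⟨Units.ext ?_, ?_⟩, Units.ext ?_⟩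
  · simp [coe_sign]
  · simp [shift]
  · simp [coe_mult]

theorem mem_innAut_of_apply_b_eq {f : MulAut (IntStarCyclic n)} (hb : f b = b)
    (hf : toSemidirect f = 1) : f ∈ innAut (IntStarCyclic n) := by
  obtain ⟨⟨hsign, hshift⟩, -⟩ := toSemidirect_eq_one_iff.1 hf
  have hinr : ∀ y, f (inr y) = inr y := fun y => by
    obtain ⟨k, hk⟩ := exists_inr_eq_b_zpow y
    rw [hk, map_zpow, hb]
  obtain ⟨p, q, s, ha⟩ :=
    exists_apply_inl_eq_of_surjective (φ := f.toMonoidHom) f.surjective hinr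
  replace ha : f a = inr p * inl (ofAdd (s : ℤ)) * inr q := ha
  obtain rfl : s = 1 := Units.ext (by simpa [coe_sign, ha] using congrArg Units.val hsign)
  obtain rfl : q = p⁻¹ := eq_inv_of_mul_eq_one_right
    (toAdd_eq_zero.1 (by simpa [shift, ha] using hshift))
  refine ⟨inr p, MulEquiv.toMonoidHom_injective (hom_ext ?_ ?_)⟩
  · exact (MulAut.conj_apply ..).trans (by rw [← map_inv]; exact ha.symm)
  · refine (MulAut.conj_apply ..).trans (Eq.trans ?_ hb.symm)
    rw [← map_inv, ← map_mul, ← map_mul, mul_inv_cancel_comm]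

theorem exists_apply_b_eq_conj {f : MulAut (IntStarCyclic n)} (hf : mult f = 1) :
    ∃ c : IntStarCyclic n, f b = MulAut.conj c b := by
  have hpow : f b ^ n = 1 := by rw [← map_pow, b_pow, map_one]
  obtain ⟨c, hc⟩ := isConj_iff.1 (isConj_inr_snd_of_pow_eq_one (NeZero.ne n) hpow)
  have hsnd : snd (f b) = ofAdd 1 := congrArg (ofAdd ·.val) hf
  exact ⟨c, by rw [← hc, hsnd, MulAut.conj_apply]⟩

theorem ker_toSemidirect : (toSemidirect (n := n)).ker = innAut (IntStarCyclic n) := by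
  ext f
  constructor
  · intro hf
    obtain ⟨c, hc⟩ := exists_apply_b_eq_conj (toSemidirect_eq_one_iff.1 (MonoidHom.mem_ker.1 hf)).2
    have hmem : (MulAut.conj c)⁻¹ * f ∈ innAut (IntStarCyclic n) := by
      refine mem_innAut_of_apply_b_eq ?_ ?_
      · rw [MulAut.mul_apply, hc, MulAut.inv_apply_self]
      · rw [map_mul, map_inv, toSemidirect_conj, hf, inv_one, one_mul]
    exact (Subgroup.mul_mem_cancel_left _ (inv_mem (MonoidHom.mem_range.2 ⟨c, rfl⟩))).1 hmem
  · rintro ⟨g, rfl⟩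
    exact toSemidirect_conj g

theorem toSemidirect_surjective : Function.Surjective (toSemidirect (n := n)) := by
  rintro ⟨d, u⟩
  obtain ⟨s, i, rfl⟩ := exists_dihedralOf_eq d
  let f := scaling s u
  let g := translation (ofAdd ((↑u⁻¹ : ZMod n) * i))
  have hfs : sign f = s := Units.ext (by simp [f, coe_sign, scaling, Units.smul_def])
  have hgs : sign g = 1 := Units.ext (by simp [g, coe_sign, translation_apply])
  have hf : shift f = 0 := by simp [f, shift, scaling]
  have hg : shift g = ↑u⁻¹ * i := by simp [g, shift, translation_apply]
  have hfm : mult f = u := Units.ext (by simp [f, coe_mult, scaling, Units.smul_def])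
  have hgm : mult g = 1 := Units.ext (by simp [g, coe_mult, translation_apply])
  refine ⟨f * g, SemidirectProduct.ext ?_ ?_⟩
  · change dihedralOf (sign (f * g)) (shift (f * g)) = _
    rw [map_mul, shift_mul, hfs, hgs, hf, hg, hfm]
    simp
  · change mult (f * g) = u
    rw [map_mul, hfm, hgm, mul_one]

/-- The identification of `Out(ℤ * Cₙ)` with `Dₙ ⋊ Aut(Cₙ)` induced by `toSemidirect`. -/
noncomputable def outEquiv :
    Out (IntStarCyclic n) ≃* DihedralGroup n ⋊[dihedralUnitsAction n] (ZMod n)ˣ :=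
  QuotientGroup.liftEquiv (φ := toSemidirect (n := n)) (innAut (IntStarCyclic n))
    toSemidirect_surjective ker_toSemidirect.symm

end Invariants

variable (n) in
/-- The presentation `⟨x₀, x₁ | x₁ ^ n⟩` of `ℤ * Cₙ`. -/
def presentedGroupEquiv :
    PresentedGroup ({FreeGroup.of (1 : Fin 2) ^ n} : Set (FreeGroup (Fin 2))) ≃*
      IntStarCyclic n :=
  have hb : ∀ r ∈ ({FreeGroup.of (1 : Fin 2) ^ n} : Set (FreeGroup (Fin 2))),
      FreeGroup.lift ![a, (b : IntStarCyclic n)] r = 1 := by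
    simp [b_pow]
  have hx : (PresentedGroup.of 1 : PresentedGroup {FreeGroup.of (1 : Fin 2) ^ n}) ^ n = 1 :=
    PresentedGroup.one_of_mem rfl
  MonoidHom.toMulEquiv
    (PresentedGroup.toGroup hb)
    (lift (PresentedGroup.of 0) (PresentedGroup.of 1) hx)
    (PresentedGroup.ext fun
      | 0 => by rw [MonoidHom.comp_apply, PresentedGroup.toGroup.of]; exact lift_a _ _ hx
      | 1 => by rw [MonoidHom.comp_apply, PresentedGroup.toGroup.of]; exact lift_b _ _ hx)
    (hom_ext
      ((congrArg (PresentedGroup.toGroup hb) (lift_a (.of 0) (.of 1) hx)).trans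
        (PresentedGroup.toGroup.of hb))
      ((congrArg (PresentedGroup.toGroup hb) (lift_b (.of 0) (.of 1) hx)).trans
        (PresentedGroup.toGroup.of hb)))

end IntStarCyclic

/-- Isomorphic groups have isomorphic outer automorphism groups. -/
def outCongr {G H : Type*} [Group G] [Group H] (e : G ≃* H) : Out G ≃* Out H :=
  QuotientGroup.congr _ _ (MulAut.congr e) <| by
    have hcomp : (MulAut.congr e : MulAut G →* MulAut H).comp MulAut.conj =
        MulAut.conj.comp (e : G →* H) := by
      ext g x
      simp [MulAut.congr]
    rw [innAut, MonoidHom.map_range, hcomp, MonoidHom.range_comp,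
      MonoidHom.range_eq_top.2 e.surjective, ← MonoidHom.range_eq_map, innAut]

theorem statement_16 (n : ℕ) (hn : 1 < n) :
    ∃ act : (ZMod n)ˣ →* MulAut (DihedralGroup n),
      (∀ (u : (ZMod n)ˣ) (i : ZMod n), act u (DihedralGroup.r i) = DihedralGroup.r ((u : ZMod n) * i)) ∧
      (∀ u : (ZMod n)ˣ, act u (DihedralGroup.sr 0) = DihedralGroup.sr 0) ∧
      Nonempty (Out (PresentedGroup ({FreeGroup.of (1 : Fin 2) ^ n} : Set (FreeGroup (Fin 2)))) ≃*
        DihedralGroup n ⋊[act] (ZMod n)ˣ) ∧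
      Nat.card (Out (PresentedGroup ({FreeGroup.of (1 : Fin 2) ^ n} : Set (FreeGroup (Fin 2))))) =
        2 * n * Nat.totient n := by
  have : NeZero n := ⟨by omega⟩
  let e := (outCongr (IntStarCyclic.presentedGroupEquiv n)).trans IntStarCyclic.outEquiv
  refine ⟨dihedralUnitsAction n, fun _ _ => rfl, fun u => ?_, ⟨e⟩, ?_⟩
  · exact congrArg DihedralGroup.sr (mul_zero _)
  · rw [Nat.card_congr e.toEquiv, SemidirectProduct.card, DihedralGroup.nat_card,
      Nat.card_eq_fintype_card, ZMod.card_units_eq_totient]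
end
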